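/- Let k and ℓ be fixed positive integers with 1 ≤ ℓ ≤ k and gcd(ℓ, k) = 1. Then there exists a constant C > 0 (depending on k) such that for all real x ≥ 16, |Σ_{2 ≤ n ≤ x, p(n) ≡ ℓ (mod k)} μ(n) ω(n) {x/n}| ≤ C · x · (log log x)^{5/2} / √(log x), where {y} = y − ⌊y⌋ denotes the fractional part and the sum runs over integers 2 ≤ n ≤ x whose smallest prime factor p(n) is congruent to ℓ modulo k. -/

import Mathlib

/-!
Write `ω(n)` as a sum over the primes `q ∣ n` and group the integers `n` by their smallest prime
factor `p`. The inner sums are then sums of `μ(m) {y / m}` over integers `m` coprime to the primes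
up to `p` and to `q`. Since `∑_{d ∣ n} μ(d)` is trivial, such a sum is governed by the analogous
sum of `μ(m) / m`, which is small while `p` and `q` are small: `∑_{n ≤ t} μ(n) / n ≪ (log t)^{-A}`,
and the coprimality conditions are removed by a convolution, controlled by Rankin's trick. Large `p`
and `q` are treated trivially, by counting integers without small prime factors.

The estimate for `∑ μ(n) / n` comes from the line `re s = 1`. There the inequality
`3 + 4 cos θ + cos 2θ ≥ 0` bounds `ζ` from below, whence the derivatives of `1 / ((s - 1) ζ(s))` are
square integrable on vertical lines, uniformly up to `re s = 1`. By Plancherel this is an `L²` bound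
for `log^k t ∑_{n ≤ t} μ(n) / n`, and it is turned into a pointwise one using that the sum varies
slowly.
-/

open Finset ArithmeticFunction Real

section Harmonic

lemma sum_inv_Ioc_eq_harmonic (N : ℕ) : ∑ d ∈ Ioc 0 N, (d : ℝ)⁻¹ = (harmonic N : ℝ) := by
  rw [harmonic_eq_sum_Icc, Rat.cast_sum]
  exact sum_congr rfl fun d _ ↦ by rw [Rat.cast_inv, Rat.cast_natCast]

lemma sum_inv_Ioc_le (N : ℕ) : ∑ d ∈ Ioc 0 N, (d : ℝ)⁻¹ ≤ 1 + Real.log N :=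
  (sum_inv_Ioc_eq_harmonic N).trans_le (harmonic_le_one_add_log N)

lemma sum_inv_Ioc_floor_le {X : ℝ} (hX : 1 ≤ X) :
    ∑ d ∈ Ioc 0 ⌊X⌋₊, (d : ℝ)⁻¹ ≤ 1 + Real.log X :=
  (sum_inv_Ioc_eq_harmonic _).trans_le (harmonic_floor_le_one_add_log X hX)

lemma log_le_sum_inv_Ioc (N : ℕ) : Real.log N ≤ ∑ d ∈ Ioc 0 N, (d : ℝ)⁻¹ := by
  rcases N.eq_zero_or_pos with rfl | hN
  · simp
  · rw [sum_inv_Ioc_eq_harmonic]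
    exact (log_le_log (mod_cast hN) (mod_cast N.le_succ)).trans (log_add_one_le_harmonic N)

end Harmonic

section MellinBounded

open MeasureTheory Filter Asymptotics Topology

variable {f : ℝ → ℂ} {C : ℝ}

lemma locallyIntegrableOn_log_pow_smul (hf : Measurable f) (hC : ∀ t, ‖f t‖ ≤ C) (k : ℕ) :
    LocallyIntegrableOn (fun t ↦ Real.log t ^ k • f t) (Set.Ioi 0) := by
  have hloc : LocallyIntegrable f :=
    (locallyIntegrable_const C).mono hf.aestronglyMeasurable
      (.of_forall fun t ↦ (hC t).trans (le_norm_self C))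
  exact (hloc.locallyIntegrableOn _).continuousOn_smul isOpen_Ioi.isLocallyClosed
    ((Real.continuousOn_log.mono fun t ht ↦ ne_of_gt ht).pow k)

lemma isBigO_log_pow_smul_atTop (hC : ∀ t, ‖f t‖ ≤ C) (k : ℕ) {r : ℝ} (hr : 0 < r) :
    (fun t ↦ Real.log t ^ k • f t) =O[atTop] (· ^ r) := by
  have hlog : (fun t ↦ Real.log t ^ k) =O[atTop] (· ^ r : ℝ → ℝ) :=
    ((isLittleO_log_rpow_rpow_atTop k hr).congr_left fun t ↦ Real.rpow_natCast _ _).isBigO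
  have hone : f =O[atTop] (fun _ ↦ (1 : ℝ)) := .of_bound C (.of_forall fun t ↦ by simpa using hC t)
  simpa using hlog.smul hone

lemma isBigO_log_pow_smul_nhdsGT (h0 : ∀ t < 1, f t = 0) (k : ℕ) (g : ℝ → ℝ) :
    (fun t ↦ Real.log t ^ k • f t) =O[𝓝[>] 0] g := by
  have hlt : ∀ᶠ t : ℝ in 𝓝[>] 0, t < 1 := nhdsWithin_le_nhds (eventually_lt_nhds one_pos)
  exact (isBigO_zero g _).congr' (hlt.mono fun t ht ↦ by simp [h0 t ht]) .rfl

lemma mellinConvergent_of_bounded (hf : Measurable f) (hC : ∀ t, ‖f t‖ ≤ C)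
    (h0 : ∀ t < 1, f t = 0) {s : ℂ} (hs : s.re < 0) : MellinConvergent f s := by
  refine mellinConvergent_of_isBigO_rpow (a := s.re / 2) (b := s.re - 1)
    (by simpa using locallyIntegrableOn_log_pow_smul hf hC 0) ?_ (by linarith) ?_ (by linarith)
  · simpa using isBigO_log_pow_smul_atTop hC 0 (r := -(s.re / 2)) (by linarith)
  · simpa using isBigO_log_pow_smul_nhdsGT h0 0 _

lemma hasDerivAt_mellin_log_pow_smul (hf : Measurable f) (hC : ∀ t, ‖f t‖ ≤ C)
    (h0 : ∀ t < 1, f t = 0) (k : ℕ) {s : ℂ} (hs : s.re < 0) :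
    HasDerivAt (mellin fun t ↦ Real.log t ^ k • f t)
      (mellin (fun t ↦ Real.log t ^ (k + 1) • f t) s) s := by
  have h := (mellin_hasDerivAt_of_isBigO_rpow (s := s) (a := s.re / 2) (b := s.re - 1)
    (locallyIntegrableOn_log_pow_smul hf hC k)
    (isBigO_log_pow_smul_atTop hC k (by linarith)) (by linarith)
    (isBigO_log_pow_smul_nhdsGT h0 k _) (by linarith)).2
  simpa only [smul_smul, ← pow_succ'] using h

lemma iteratedDeriv_mellin_of_bounded (hf : Measurable f) (hC : ∀ t, ‖f t‖ ≤ C)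
    (h0 : ∀ t < 1, f t = 0) (k : ℕ) {s : ℂ} (hs : s.re < 0) :
    iteratedDeriv k (mellin f) s = mellin (fun t ↦ Real.log t ^ k • f t) s := by
  induction k generalizing s with
  | zero => simp
  | succ k ih =>
    have hnhds : {z : ℂ | z.re < 0} ∈ 𝓝 s :=
      (isOpen_lt Complex.continuous_re continuous_const).mem_nhds hs
    have heq : iteratedDeriv k (mellin f) =ᶠ[𝓝 s] mellin fun t ↦ Real.log t ^ k • f t :=
      mem_of_superset hnhds fun z hz ↦ ih hz
    rw [iteratedDeriv_succ, heq.deriv_eq]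
    exact (hasDerivAt_mellin_log_pow_smul hf hC h0 k hs).deriv

lemma LSeries_eq_mul_mellin (f : ℕ → ℂ) {r : ℝ} (hr : 0 ≤ r) {s : ℂ} (hs : r < s.re)
    (hf : LSeriesSummable f s)
    (hO : (fun n ↦ ∑ k ∈ Ioc 0 n, f k) =O[atTop] fun n ↦ (n : ℝ) ^ r) :
    LSeries f s = s * mellin (fun t ↦ ∑ k ∈ Ioc 0 ⌊t⌋₊, f k) (-s) := by
  have hzero (t : ℝ) (ht : t ∈ Set.Ioi 0 \ Set.Ici 1) :
      (t : ℂ) ^ (-s - 1) • ∑ k ∈ Ioc 0 ⌊t⌋₊, f k = 0 := by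
    have : ⌊t⌋₊ = 0 := Nat.floor_eq_zero.mpr (not_le.mp ht.2)
    simp [this]
  rw [LSeries_eq_mul_integral f hr hs hf hO, ← integral_Ici_eq_integral_Ioi, mellin,
    setIntegral_eq_of_subset_of_forall_sdiff_eq_zero measurableSet_Ioi
      (fun t ht ↦ one_pos.trans_le ht) hzero]
  refine congrArg (s * ·) (integral_congr_ae (.of_forall fun t ↦ ?_))
  beta_reduce
  rw [smul_eq_mul, mul_comm, neg_add']
  rfl

end MellinBounded

section ZetaApproximation

open MeasureTheory Filter Topology

/-- The fractional part function cut off below `N`. The value of its Mellin transform at `-s` is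
the Euler–Maclaurin remainder in approximating `ζ(s)` by a partial sum of length `N`. -/
noncomputable def fractTail (N : ℕ) : ℝ → ℂ :=
  Set.indicator (Set.Ioi (N : ℝ)) fun t ↦ ((Int.fract t : ℝ) : ℂ)

lemma norm_fractTail_le_indicator (N : ℕ) (t : ℝ) :
    ‖fractTail N t‖ ≤ Set.indicator (Set.Ioi (N : ℝ)) 1 t := by
  rw [fractTail, norm_indicator_eq_indicator_norm]
  refine Set.indicator_le_indicator ?_
  rw [Complex.norm_real, norm_of_nonneg (Int.fract_nonneg t)]
  exact (Int.fract_lt_one t).le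

lemma norm_fractTail_le_one (N : ℕ) (t : ℝ) : ‖fractTail N t‖ ≤ 1 :=
  (norm_fractTail_le_indicator N t).trans
    (Set.indicator_apply_le' (fun _ ↦ le_rfl) fun _ ↦ zero_le_one)

lemma measurable_fractTail (N : ℕ) : Measurable (fractTail N) :=
  (Complex.measurable_ofReal.comp measurable_fract).indicator measurableSet_Ioi

lemma fractTail_of_lt_one {N : ℕ} (hN : 1 ≤ N) {t : ℝ} (ht : t < 1) : fractTail N t = 0 :=
  Set.indicator_of_notMem (not_lt.mpr (ht.le.trans (mod_cast hN))) _

lemma mellinConvergent_fractTail {N : ℕ} (hN : 1 ≤ N) {s : ℂ} (hs : 0 < s.re) :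
    MellinConvergent (fractTail N) (-s) :=
  mellinConvergent_of_bounded (measurable_fractTail N) (norm_fractTail_le_one N)
    (fun _ ↦ fractTail_of_lt_one hN) (by simpa)

lemma differentiableAt_mellin_fractTail_neg {N : ℕ} (hN : 1 ≤ N) {s : ℂ} (hs : 0 < s.re) :
    DifferentiableAt ℂ (fun z ↦ mellin (fractTail N) (-z)) s := by
  have h := (hasDerivAt_mellin_log_pow_smul (measurable_fractTail N) (norm_fractTail_le_one N)
    (fun _ ↦ fractTail_of_lt_one hN) 0 (s := -s) (by simpa)).differentiableAt
  simp only [pow_zero, one_smul] at h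
  exact h.comp s differentiableAt_id.neg

lemma norm_mellin_fractTail_le {N : ℕ} (hN : 1 ≤ N) {s : ℂ} (hs : 0 < s.re) :
    ‖mellin (fractTail N) (-s)‖ ≤ (N : ℝ) ^ (-s.re) / s.re := by
  have hN0 : (0 : ℝ) < N := mod_cast hN
  have hint : IntegrableOn (fun t : ℝ ↦ t ^ (-s.re - 1)) (Set.Ioi (N : ℝ)) :=
    integrableOn_Ioi_rpow_of_lt (by linarith) hN0
  have hle (t : ℝ) (ht : 0 < t) : ‖(t : ℂ) ^ (-s - 1) • fractTail N t‖ ≤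
      Set.indicator (Set.Ioi (N : ℝ)) (fun t ↦ t ^ (-s.re - 1)) t := by
    have hcpow : ‖(t : ℂ) ^ (-s - 1)‖ = t ^ (-s.re - 1) := by
      simp [Complex.norm_cpow_eq_rpow_re_of_pos ht]
    calc ‖(t : ℂ) ^ (-s - 1) • fractTail N t‖
        ≤ t ^ (-s.re - 1) * Set.indicator (Set.Ioi (N : ℝ)) 1 t := by
          rw [norm_smul, hcpow]
          gcongr
          exact norm_fractTail_le_indicator N t
      _ = _ := by by_cases h : (N : ℝ) < t <;> simp [h]
  calc ‖mellin (fractTail N) (-s)‖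
      ≤ ∫ t in Set.Ioi 0, Set.indicator (Set.Ioi (N : ℝ)) (fun t ↦ t ^ (-s.re - 1)) t :=
        norm_integral_le_of_norm_le (hint.integrable_indicator measurableSet_Ioi).integrableOn
          ((ae_restrict_mem measurableSet_Ioi).mono hle)
    _ = ∫ t in Set.Ioi (N : ℝ), t ^ (-s.re - 1) := by
        rw [setIntegral_indicator measurableSet_Ioi,
          Set.inter_eq_right.mpr (Set.Ioi_subset_Ioi hN0.le)]
    _ = (N : ℝ) ^ (-s.re) / s.re := by
        rw [integral_Ioi_rpow_of_lt (by linarith) hN0, sub_add_cancel, neg_div_neg_eq]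

lemma hasMellin_indicator_Ioi_cpow {c : ℝ} (hc : 0 < c) {a s : ℂ} (h : a.re < s.re) :
    HasMellin (Set.indicator (Set.Ioi c) fun t ↦ (t : ℂ) ^ a) (-s)
      ((c : ℂ) ^ (a - s) / (s - a)) := by
  have hre : (a - s - 1).re < -1 := by simp only [Complex.sub_re, Complex.one_re]; linarith
  have heq (t : ℝ) (ht : 0 < t) : Set.indicator (Set.Ioi c) (fun t ↦ (t : ℂ) ^ (a - s - 1)) t =
      (t : ℂ) ^ (-s - 1) • Set.indicator (Set.Ioi c) (fun t ↦ (t : ℂ) ^ a) t := by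
    by_cases hct : c < t
    · simp only [Set.mem_Ioi, hct, Set.indicator_of_mem, smul_eq_mul]
      rw [← Complex.cpow_add _ _ (mod_cast ht.ne')]
      congr 1
      ring
    · simp [hct]
  constructor
  · exact ((integrableOn_Ioi_cpow_of_lt hre hc).integrable_indicator
      measurableSet_Ioi).integrableOn.congr_fun heq measurableSet_Ioi
  · rw [mellin, ← setIntegral_congr_fun measurableSet_Ioi heq,
      setIntegral_indicator measurableSet_Ioi, Set.inter_eq_right.mpr (Set.Ioi_subset_Ioi hc.le),
      integral_Ioi_cpow_of_lt hre hc, sub_add_cancel, ← neg_sub s a, div_neg, neg_div, neg_neg]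

lemma natCast_floor_sub_eq_indicator_sub_fractTail (N : ℕ) {t : ℝ} (ht : 0 ≤ t) :
    ((⌊t⌋₊ - N : ℕ) : ℂ) = Set.indicator (Set.Ioi (N : ℝ)) (fun t ↦ (t : ℂ) ^ (1 : ℂ)) t -
      (N : ℂ) • Set.indicator (Set.Ioi (N : ℝ)) (fun t ↦ (t : ℂ) ^ (0 : ℂ)) t - fractTail N t := by
  by_cases h : (N : ℝ) < t
  · have hfloor : ((⌊t⌋₊ : ℝ) : ℂ) = ((t - Int.fract t : ℝ) : ℂ) := by
      rw [natCast_floor_eq_intCast_floor ht, Int.self_sub_fract]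
    rw [Nat.cast_sub (Nat.le_floor h.le), ← Complex.ofReal_natCast, hfloor, Complex.ofReal_sub]
    simp only [fractTail, Set.mem_Ioi, h, Set.indicator_of_mem, Complex.cpow_one,
      Complex.cpow_zero, smul_eq_mul, mul_one]
    ring
  · have : ⌊t⌋₊ ≤ N := by simpa using Nat.floor_mono (not_lt.mp h)
    simp [fractTail, h, this]

lemma mellin_floor_sub {N : ℕ} (hN : 1 ≤ N) {s : ℂ} (hs : 1 < s.re) :
    mellin (fun t ↦ ((⌊t⌋₊ - N : ℕ) : ℂ)) (-s) =
      (N : ℂ) ^ (1 - s) / (s - 1) - N * ((N : ℂ) ^ (-s) / s) - mellin (fractTail N) (-s) := by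
  have hN0 : (0 : ℝ) < N := mod_cast hN
  have hone := hasMellin_indicator_Ioi_cpow hN0 (a := 1) (s := s) (by simpa)
  have hzero := hasMellin_indicator_Ioi_cpow hN0 (a := 0) (s := s) (by simp; linarith)
  have hsmul := hasMellin_const_smul hzero.1 (N : ℂ)
  have hlin := hasMellin_sub hone.1 hsmul.1
  have hfract := hasMellin_sub hlin.1 (mellinConvergent_fractTail hN (by linarith))
  rw [hlin.2, hsmul.2, hone.2, hzero.2, Complex.ofReal_natCast, zero_sub, sub_zero,
    smul_eq_mul] at hfract
  rw [← hfract.2]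
  refine setIntegral_congr_fun measurableSet_Ioi fun t ht ↦ congrArg _ ?_
  exact natCast_floor_sub_eq_indicator_sub_fractTail N (le_of_lt ht)

lemma sum_Ioc_ite_lt (N m : ℕ) : ∑ k ∈ Ioc 0 m, (if N < k then (1 : ℂ) else 0) = (m - N : ℕ) := by
  rw [sum_boole]
  have : {k ∈ Ioc 0 m | N < k} = Ioc N m := by grind
  rw [this, Nat.card_Ioc]

lemma LSeriesSummable_ite_lt (N : ℕ) {s : ℂ} (hs : 1 < s.re) :
    LSeriesSummable (fun n ↦ if N < n then 1 else 0) s :=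
  LSeriesSummable_of_le_const_mul_rpow hs ⟨1, fun n _ ↦ by split_ifs <;> simp⟩

lemma riemannZeta_sub_LSeries_ite_lt (N : ℕ) {s : ℂ} (hs : 1 < s.re) :
    riemannZeta s - LSeries (fun n ↦ if N < n then 1 else 0) s =
      ∑ n ∈ Ioc 0 N, (n : ℂ) ^ (-s) := by
  rw [← LSeries_one_eq_riemannZeta hs, LSeries, LSeries,
    ← (LSeriesSummable_one_iff.mpr hs).tsum_sub (LSeriesSummable_ite_lt N hs),
    tsum_eq_sum (s := Ioc 0 N)]
  · refine sum_congr rfl fun n hn ↦ ?_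
    have hn : n ≠ 0 ∧ ¬ N < n := by grind
    simp [LSeries.term_of_ne_zero, hn, Complex.cpow_neg]
  · intro n hn
    rcases eq_or_ne n 0 with rfl | hn0
    · simp
    · have : N < n := by grind
      simp [LSeries.term_of_ne_zero, hn0, this]

lemma LSeries_ite_lt {N : ℕ} (hN : 1 ≤ N) {s : ℂ} (hs : 1 < s.re) :
    LSeries (fun n ↦ if N < n then 1 else 0) s =
      (N : ℂ) ^ (1 - s) / (s - 1) - s * mellin (fractTail N) (-s) := by
  have hNC : (N : ℂ) ≠ 0 := mod_cast (by omega : N ≠ 0)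
  have hs0 : s ≠ 0 := Complex.ne_zero_of_one_lt_re hs
  have hs1 : s - 1 ≠ 0 := sub_ne_zero.mpr (by rintro rfl; simp at hs)
  have hO : (fun n ↦ ∑ k ∈ Ioc 0 n, if N < k then (1 : ℂ) else 0) =O[atTop]
      fun n ↦ (n : ℝ) ^ (1 : ℝ) := by
    refine .of_bound 1 (.of_forall fun n ↦ ?_)
    rw [sum_Ioc_ite_lt]
    simp
  rw [LSeries_eq_mul_mellin _ zero_le_one hs (LSeriesSummable_ite_lt N hs) hO]
  simp_rw [sum_Ioc_ite_lt]
  rw [mellin_floor_sub hN hs, Complex.cpow_sub _ _ hNC, Complex.cpow_neg, Complex.cpow_one]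
  field_simp
  ring

lemma riemannZeta₁_eq_sub_one_mul {s : ℂ} (hs : s ≠ 1) :
    riemannZeta₁ s = (s - 1) * riemannZeta s := by
  rw [riemannZeta_eq_inv_sub_mul hs, mul_inv_cancel_left₀ (sub_ne_zero.mpr hs)]

lemma riemannZeta₁_eq_sum_sub_mellin {N : ℕ} (hN : 1 ≤ N) {s : ℂ} (hs : 0 < s.re) :
    riemannZeta₁ s = (s - 1) * ∑ n ∈ Ioc 0 N, (n : ℂ) ^ (-s) + (N : ℂ) ^ (1 - s) -
      (s - 1) * s * mellin (fractTail N) (-s) := by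
  set F : ℂ → ℂ := fun s ↦ (s - 1) * ∑ n ∈ Ioc 0 N, (n : ℂ) ^ (-s) + (N : ℂ) ^ (1 - s) -
      (s - 1) * s * mellin (fractTail N) (-s)
  have hopen (σ : ℝ) : IsOpen {z : ℂ | σ < z.re} := isOpen_lt continuous_const Complex.continuous_re
  have hF : AnalyticOnNhd ℂ F {z | 0 < z.re} := by
    refine DifferentiableOn.analyticOnNhd (fun z hz ↦ ?_) (hopen 0)
    have hmellin := differentiableAt_mellin_fractTail_neg hN hz
    have hsum : DifferentiableAt ℂ (fun s : ℂ ↦ ∑ n ∈ Ioc 0 N, (n : ℂ) ^ (-s)) z :=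
      .fun_sum fun n hn ↦ .const_cpow (by fun_prop)
        (Or.inl (mod_cast (mem_Ioc.mp hn).1.ne'))
    have hpow : DifferentiableAt ℂ (fun s : ℂ ↦ (N : ℂ) ^ (1 - s)) z :=
      .const_cpow (by fun_prop) (Or.inl (mod_cast (by omega : N ≠ 0)))
    exact DifferentiableAt.differentiableWithinAt (by fun_prop)
  have heq : riemannZeta₁ =ᶠ[𝓝 2] F := by
    filter_upwards [(hopen 1).mem_nhds (by simp : (1 : ℝ) < (2 : ℂ).re)] with z hz
    have hz1 : z ≠ 1 := by rintro rfl; simp at hz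
    have hz1' : z - 1 ≠ 0 := sub_ne_zero.mpr hz1
    rw [riemannZeta₁_eq_sub_one_mul hz1, sub_eq_iff_eq_add.mp (riemannZeta_sub_LSeries_ite_lt N hz),
      LSeries_ite_lt hN hz]
    simp only [F]
    field_simp
    ring
  exact (differentiable_riemannZeta₁.differentiableOn.analyticOnNhd
    (hopen 0)).eqOn_of_preconnected_of_eventuallyEq hF (convex_halfSpace_re_gt 0).isPreconnected
    (by simp : (0 : ℝ) < (2 : ℂ).re) heq hs

end ZetaApproximation

section ZetaUpperBound

/-- The size of the imaginary part of `s`, shifted so that it bounds `‖s‖` and `‖s - 1‖` in the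
strip `0 ≤ Re s ≤ 3`. -/
noncomputable def height (s : ℂ) : ℝ := |s.im| + 3

lemma three_le_height (s : ℂ) : 3 ≤ height s := le_add_of_nonneg_left (abs_nonneg _)

lemma height_pos (s : ℂ) : 0 < height s := three_pos.trans_le (three_le_height s)

lemma one_le_height_rpow (s : ℂ) {κ : ℝ} (hκ : 0 ≤ κ) : 1 ≤ height s ^ κ :=
  one_le_rpow (by linarith [three_le_height s]) hκ

lemma height_le_two_mul {s w : ℂ} (h : ‖w - s‖ ≤ 1) : height w ≤ 2 * height s := by
  have him : |w.im - s.im| ≤ 1 := (Complex.abs_im_le_norm (w - s)).trans h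
  have htri := abs_sub_abs_le_abs_sub w.im s.im
  have hpos := abs_nonneg s.im
  rw [height, height]
  linarith

lemma rpow_le_four_mul_of_le_two_mul {x y κ : ℝ} (hx : 0 ≤ x) (hy : 0 ≤ y) (h : x ≤ 2 * y)
    (hκ : 0 ≤ κ) (hκ1 : κ ≤ 1) : x ^ (1 + κ) ≤ 4 * y ^ (1 + κ) :=
  calc x ^ (1 + κ) ≤ (2 * y) ^ (1 + κ) := rpow_le_rpow hx h (by linarith)
    _ = 2 ^ (1 + κ) * y ^ (1 + κ) := mul_rpow zero_le_two hy
    _ ≤ 2 ^ (2 : ℝ) * y ^ (1 + κ) := by gcongr <;> linarith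
    _ = 4 * y ^ (1 + κ) := by norm_num

lemma norm_sum_natCast_cpow_neg_le {N : ℕ} (hN : 1 ≤ N) {a : ℝ} (ha : 0 < a) {s : ℂ}
    (hs : 1 - a ≤ s.re) :
    ‖∑ n ∈ Ioc 0 N, (n : ℂ) ^ (-s)‖ ≤ (1 + 1 / a) * (N : ℝ) ^ (2 * a) := by
  have hN1 : (1 : ℝ) ≤ N := mod_cast hN
  have hterm : ∀ n ∈ Ioc 0 N, ‖(n : ℂ) ^ (-s)‖ ≤ (N : ℝ) ^ a * (n : ℝ)⁻¹ := by
    intro n hn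
    obtain ⟨hn0, hnN⟩ := mem_Ioc.mp hn
    have hn1 : (1 : ℝ) ≤ n := mod_cast hn0
    calc ‖(n : ℂ) ^ (-s)‖ = (n : ℝ) ^ (-s.re) := by
          rw [Complex.norm_natCast_cpow_of_pos hn0, Complex.neg_re]
      _ ≤ (n : ℝ) ^ (a - 1) := rpow_le_rpow_of_exponent_le hn1 (by linarith)
      _ = (n : ℝ) ^ a * (n : ℝ)⁻¹ := by rw [rpow_sub_one (by linarith), div_eq_mul_inv]
      _ ≤ (N : ℝ) ^ a * (n : ℝ)⁻¹ := by gcongr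
  have hlog : Real.log N ≤ (N : ℝ) ^ a / a := log_le_rpow_div (by linarith) ha
  have hone : 1 ≤ (N : ℝ) ^ a := one_le_rpow hN1 ha.le
  calc ‖∑ n ∈ Ioc 0 N, (n : ℂ) ^ (-s)‖ ≤ (N : ℝ) ^ a * ∑ n ∈ Ioc 0 N, (n : ℝ)⁻¹ := by
        rw [mul_sum]
        exact norm_sum_le_of_le _ hterm
    _ ≤ (N : ℝ) ^ a * ((N : ℝ) ^ a + (N : ℝ) ^ a / a) := by
        gcongr
        linarith [sum_inv_Ioc_le N]
    _ = (1 + 1 / a) * (N : ℝ) ^ (2 * a) := by rw [two_mul, rpow_add (by linarith)]; ring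

lemma exists_nat_height_le (s : ℂ) : ∃ N : ℕ, 1 ≤ N ∧ (N : ℝ) ≤ height s ∧ height s ≤ 4 * N := by
  refine ⟨⌊|s.im|⌋₊ + 1, by omega, ?_, ?_⟩ <;> rw [height] <;> push_cast
  · linarith [Nat.floor_le (abs_nonneg s.im)]
  · linarith [Nat.lt_floor_add_one |s.im|, (Nat.cast_nonneg ⌊|s.im|⌋₊ : (0 : ℝ) ≤ _)]

lemma norm_le_height {s : ℂ} (h : |s.re| ≤ 3) : ‖s‖ ≤ height s := by
  rw [height]
  linarith [Complex.norm_le_abs_re_add_abs_im s]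

lemma norm_sub_one_le_height {s : ℂ} (h0 : 0 ≤ s.re) (h3 : s.re ≤ 3) : ‖s - 1‖ ≤ height s := by
  have hre : |(s - 1).re| ≤ 3 := by
    rw [Complex.sub_re, Complex.one_re, abs_le]
    constructor <;> linarith
  simpa [height] using norm_le_height hre

lemma norm_mellin_fractTail_le_of_height_le {N : ℕ} (hN : 1 ≤ N) {s : ℂ} (hs : 1 / 2 ≤ s.re)
    (hτ : height s ≤ 4 * N) :
    ‖mellin (fractTail N) (-s)‖ ≤ 8 * (N : ℝ) ^ (1 - s.re) / height s := by
  have hN0 : (0 : ℝ) < N := mod_cast hN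
  have hpos := height_pos s
  calc ‖mellin (fractTail N) (-s)‖ ≤ (N : ℝ) ^ (-s.re) / s.re :=
        norm_mellin_fractTail_le hN (by linarith)
    _ = (N : ℝ) ^ (1 - s.re) / N / s.re := by
        rw [sub_eq_neg_add, rpow_add_one hN0.ne', mul_div_cancel_right₀ _ hN0.ne']
    _ ≤ (N : ℝ) ^ (1 - s.re) / (height s / 4) / (1 / 2) := by
        gcongr
        linarith
    _ = 8 * (N : ℝ) ^ (1 - s.re) / height s := by ring

theorem norm_riemannZeta₁_le {κ : ℝ} (hκ : 0 < κ) (hκ1 : κ ≤ 1) {s : ℂ} (h1 : 1 - κ / 2 ≤ s.re)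
    (h3 : s.re ≤ 3) : ‖riemannZeta₁ s‖ ≤ (10 + 2 / κ) * height s ^ (1 + κ) := by
  obtain ⟨N, hN, hNτ, hτN⟩ := exists_nat_height_le s
  have hN1 : (1 : ℝ) ≤ N := mod_cast hN
  have hτ := height_pos s
  have hNκ : (N : ℝ) ^ κ ≤ height s ^ κ := rpow_le_rpow (by linarith) hNτ hκ.le
  have hsum : ‖∑ n ∈ Ioc 0 N, (n : ℂ) ^ (-s)‖ ≤ (1 + 2 / κ) * height s ^ κ := by
    refine (norm_sum_natCast_cpow_neg_le hN (half_pos hκ) h1).trans ?_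
    rw [one_div_div, mul_div_cancel₀ κ two_ne_zero]
    gcongr
  have hpow : (N : ℝ) ^ (1 - s.re) ≤ height s ^ κ :=
    (rpow_le_rpow_of_exponent_le hN1 (by linarith)).trans hNκ
  have hmellin : ‖mellin (fractTail N) (-s)‖ ≤ 8 * height s ^ κ / height s :=
    (norm_mellin_fractTail_le_of_height_le hN (by linarith) hτN).trans (by gcongr)
  have hs1 : ‖s - 1‖ ≤ height s := norm_sub_one_le_height (by linarith) h3
  have hs : ‖s‖ ≤ height s := norm_le_height (by rw [abs_le]; constructor <;> linarith)
  calc ‖riemannZeta₁ s‖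
      ≤ ‖s - 1‖ * ‖∑ n ∈ Ioc 0 N, (n : ℂ) ^ (-s)‖ + (N : ℝ) ^ (1 - s.re) +
        ‖s - 1‖ * ‖s‖ * ‖mellin (fractTail N) (-s)‖ := by
        rw [riemannZeta₁_eq_sum_sub_mellin hN (by linarith)]
        refine (norm_sub_le _ _).trans (add_le_add ((norm_add_le _ _).trans_eq ?_) ?_)
        · rw [norm_mul, Complex.norm_natCast_cpow_of_pos hN, Complex.sub_re, Complex.one_re]
        · rw [norm_mul, norm_mul]
    _ ≤ height s * ((1 + 2 / κ) * height s ^ κ) + height s * height s ^ κ +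
        height s * height s * (8 * height s ^ κ / height s) := by
        gcongr
        exact hpow.trans (le_mul_of_one_le_left (by positivity) (by linarith [three_le_height s]))
    _ = (10 + 2 / κ) * height s ^ (1 + κ) := by
        rw [rpow_one_add' hτ.le (by linarith)]
        field_simp
        ring

theorem norm_deriv_riemannZeta₁_le {κ : ℝ} (hκ : 0 < κ) (hκ1 : κ ≤ 1) {s : ℂ}
    (h1 : 1 - κ / 4 ≤ s.re) (h2 : s.re ≤ 5 / 2) :
    ‖deriv riemannZeta₁ s‖ ≤ (10 + 2 / κ) * (4 * height s ^ (1 + κ)) / (κ / 4) := by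
  refine Complex.norm_deriv_le_of_forall_mem_sphere_norm_le (by positivity)
    differentiable_riemannZeta₁.diffContOnCl fun z hz ↦ ?_
  rw [mem_sphere_iff_norm] at hz
  have hre : |z.re - s.re| ≤ κ / 4 := hz ▸ Complex.abs_re_le_norm (z - s)
  rw [abs_le] at hre
  refine (norm_riemannZeta₁_le hκ hκ1 (by linarith) (by linarith)).trans ?_
  gcongr
  exact rpow_le_four_mul_of_le_two_mul (height_pos z).le (height_pos s).le
    (height_le_two_mul (by linarith)) hκ.le hκ1

lemma exists_norm_riemannZeta₁_sub_le {κ : ℝ} (hκ : 0 < κ) (hκ1 : κ ≤ 1) :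
    ∃ L > 0, ∀ s w : ℂ, 1 ≤ s.re → s.re ≤ 2 → ‖w - s‖ ≤ κ / 4 →
      ‖riemannZeta₁ w - riemannZeta₁ s‖ ≤ L * height s ^ (1 + κ) * ‖w - s‖ := by
  refine ⟨(10 + 2 / κ) * (4 * 4) / (κ / 4), by positivity, fun s w h1 h2 hw ↦ ?_⟩
  refine (convex_closedBall s (κ / 4)).norm_image_sub_le_of_norm_deriv_le
    (fun z _ ↦ differentiable_riemannZeta₁ z) (fun z hz ↦ ?_)
    (Metric.mem_closedBall_self (by positivity)) (mem_closedBall_iff_norm.mpr hw)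
  rw [mem_closedBall_iff_norm] at hz
  have hre := abs_le.mp ((Complex.abs_re_le_norm (z - s)).trans hz)
  rw [Complex.sub_re] at hre
  calc ‖deriv riemannZeta₁ z‖ ≤ (10 + 2 / κ) * (4 * height z ^ (1 + κ)) / (κ / 4) :=
        norm_deriv_riemannZeta₁_le hκ hκ1 (by linarith) (by linarith)
    _ ≤ (10 + 2 / κ) * (4 * (4 * height s ^ (1 + κ))) / (κ / 4) := by
        gcongr
        exact rpow_le_four_mul_of_le_two_mul (height_pos z).le (height_pos s).le
          (height_le_two_mul (by linarith)) hκ.le hκ1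
    _ = (10 + 2 / κ) * (4 * 4) / (κ / 4) * height s ^ (1 + κ) := by ring

end ZetaUpperBound

section ZetaLowerBound

lemma riemannZeta₁_ne_zero_of_one_le_re {s : ℂ} (h : 1 ≤ s.re) : riemannZeta₁ s ≠ 0 := by
  rcases eq_or_ne s 1 with rfl | hs
  · simp [riemannZeta₁_one]
  · rw [riemannZeta₁_eq_sub_one_mul hs]
    exact mul_ne_zero (sub_ne_zero.mpr hs) (riemannZeta_ne_zero_of_one_le_re h)

lemma pow_le_norm_riemannZeta₁_product {a t : ℝ} (ha : 0 < a) :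
    2 * a ^ 3 * |t| ^ 5 ≤ ‖riemannZeta₁ (1 + a)‖ ^ 3 * ‖riemannZeta₁ (1 + a + Complex.I * t)‖ ^ 4 *
      ‖riemannZeta₁ (1 + a + 2 * Complex.I * t)‖ := by
  have hprod : 1 ≤ ‖riemannZeta (1 + a)‖ ^ 3 * ‖riemannZeta (1 + a + Complex.I * t)‖ ^ 4 *
      ‖riemannZeta (1 + a + 2 * Complex.I * t)‖ := by
    simpa [DirichletCharacter.LFunctionTrivChar, DirichletCharacter.LFunction_modOne_eq] using
      DirichletCharacter.norm_LFunction_product_ge_one (N := 1) 1 ha t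
  have hnorm {s : ℂ} (hre : s.re = 1 + a) : ‖riemannZeta₁ s‖ = ‖s - 1‖ * ‖riemannZeta s‖ := by
    have hs : s ≠ 1 := by rintro rfl; simp at hre; linarith
    rw [riemannZeta₁_eq_sub_one_mul hs, norm_mul]
  have him {s : ℂ} : |s.im| ≤ ‖s - 1‖ := by simpa using Complex.abs_im_le_norm (s - 1)
  have h1 : a ≤ ‖(1 + a : ℂ) - 1‖ := by simp [abs_of_pos ha]
  have h2 : |t| ≤ ‖1 + a + Complex.I * t - 1‖ := by
    simpa using him (s := 1 + a + Complex.I * t)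
  have h3 : 2 * |t| ≤ ‖1 + a + 2 * Complex.I * t - 1‖ := by
    simpa [abs_mul] using him (s := 1 + a + 2 * Complex.I * t)
  rw [hnorm (by simp), hnorm (by simp), hnorm (by simp)]
  calc 2 * a ^ 3 * |t| ^ 5 = a ^ 3 * |t| ^ 4 * (2 * |t|) := by ring
    _ ≤ ‖(1 + a : ℂ) - 1‖ ^ 3 * ‖1 + a + Complex.I * t - 1‖ ^ 4 *
        ‖1 + a + 2 * Complex.I * t - 1‖ := by gcongr
    _ ≤ ‖(1 + a : ℂ) - 1‖ ^ 3 * ‖1 + a + Complex.I * t - 1‖ ^ 4 *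
        ‖1 + a + 2 * Complex.I * t - 1‖ * _ := le_mul_of_one_le_right (by positivity) hprod
    _ = _ := by ring

lemma norm_riemannZeta₁_one_add_le {κ a : ℝ} (hκ : 0 < κ) (hκ1 : κ ≤ 1) (ha : 0 ≤ a)
    (ha1 : a ≤ 1) : ‖riemannZeta₁ (1 + a)‖ ≤ 9 * (10 + 2 / κ) := by
  have hheight : height (1 + a) = 3 := by simp [height]
  refine (norm_riemannZeta₁_le hκ hκ1 (by simp; linarith) (by simp; linarith)).trans ?_
  rw [hheight, mul_comm 9]
  gcongr
  calc (3 : ℝ) ^ (1 + κ) ≤ 3 ^ (2 : ℝ) := by gcongr <;> linarith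
    _ = 9 := by norm_num

lemma exists_le_norm_riemannZeta₁_pow_four {κ : ℝ} (hκ : 0 < κ) (hκ1 : κ ≤ 1) :
    ∃ B ≥ 1, ∀ s : ℂ, 1 < s.re → s.re ≤ 2 → 1 ≤ |s.im| →
      (s.re - 1) ^ 3 * height s ^ 4 ≤ B * height s ^ κ * ‖riemannZeta₁ s‖ ^ 4 := by
  set A := 10 + 2 / κ
  have hA : 10 ≤ A := le_add_of_nonneg_right (by positivity)
  refine ⟨512 * (9 * A) ^ 3 * (4 * A), ?_, fun s h1 h2 him ↦ ?_⟩
  · nlinarith [pow_le_pow_left₀ (by norm_num) hA 3]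
  have ha : 0 < s.re - 1 := by linarith
  have hτ := height_pos s
  have hs : (1 + (s.re - 1 : ℝ) + Complex.I * s.im : ℂ) = s := by apply Complex.ext <;> simp
  set z : ℂ := 1 + (s.re - 1 : ℝ) + 2 * Complex.I * s.im with hz
  have htwo : ‖riemannZeta₁ z‖ ≤ A * (4 * height s ^ (1 + κ)) := by
    refine (norm_riemannZeta₁_le hκ hκ1 (by simp [hz]; linarith) (by simp [hz]; linarith)).trans ?_
    gcongr
    refine rpow_le_four_mul_of_le_two_mul (height_pos z).le hτ.le ?_ hκ.le hκ1
    simp only [height, hz]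
    simp [abs_mul]
    linarith
  have hprod := pow_le_norm_riemannZeta₁_product ha (t := s.im)
  rw [hs] at hprod
  have hmain : 2 * (s.re - 1) ^ 3 * (height s / 4) ^ 5 ≤
      (9 * A) ^ 3 * ‖riemannZeta₁ s‖ ^ 4 * (A * (4 * height s ^ (1 + κ))) :=
    calc 2 * (s.re - 1) ^ 3 * (height s / 4) ^ 5 ≤ 2 * (s.re - 1) ^ 3 * |s.im| ^ 5 := by
          gcongr
          rw [height]
          linarith
      _ ≤ _ := hprod
      _ ≤ _ := by
          gcongr
          exact norm_riemannZeta₁_one_add_le hκ hκ1 ha.le (by linarith)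
  rw [rpow_one_add' hτ.le (by linarith)] at hmain
  refine le_of_mul_le_mul_right ?_ hτ
  linear_combination 512 * hmain

lemma cube_mul_le_of_cube_mul_pow_four_le {a l B M τ z : ℝ} (hl : 0 ≤ l) (hB : 1 ≤ B) (hM : 1 ≤ M)
    (hτ : 0 ≤ τ) (hz : 0 ≤ z) (ha : l ^ 4 / M ^ 5 ≤ a) (h : a ^ 3 * τ ^ 4 ≤ B * M * z ^ 4) :
    l ^ 3 * τ ≤ B * M ^ 4 * z := by
  refine (pow_le_pow_iff_left₀ (by positivity) (by positivity) four_ne_zero).mp ?_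
  calc (l ^ 3 * τ) ^ 4 = (l ^ 4 / M ^ 5) ^ 3 * τ ^ 4 * M ^ 15 := by field_simp
    _ ≤ a ^ 3 * τ ^ 4 * M ^ 15 := by gcongr
    _ ≤ B * M * z ^ 4 * M ^ 15 := by gcongr
    _ = B * (M ^ 4 * z) ^ 4 := by ring
    _ ≤ B ^ 4 * (M ^ 4 * z) ^ 4 := by gcongr; exact le_self_pow₀ hB four_ne_zero
    _ = (B * M ^ 4 * z) ^ 4 := by ring

lemma exists_cube_mul_height_le_norm_riemannZeta₁ {κ : ℝ} (hκ : 0 < κ) (hκ1 : κ ≤ 1) :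
    ∃ B ≥ 1, ∀ l > 0, ∀ s : ℂ, l ^ 4 / (height s ^ κ) ^ 5 ≤ s.re - 1 → s.re ≤ 2 → 1 ≤ |s.im| →
      l ^ 3 * height s ≤ B * (height s ^ κ) ^ 4 * ‖riemannZeta₁ s‖ := by
  obtain ⟨B, hB, hprod⟩ := exists_le_norm_riemannZeta₁_pow_four hκ hκ1
  refine ⟨B, hB, fun l hl s hs h2 him ↦ ?_⟩
  have hM : 1 ≤ height s ^ κ := one_le_height_rpow s hκ.le
  have hpos : 0 < l ^ 4 / (height s ^ κ) ^ 5 := by positivity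
  exact cube_mul_le_of_cube_mul_pow_four_le hl.le hB hM (height_pos s).le (norm_nonneg _) hs
    (hprod s (by linarith) h2 him)

lemma exists_pow_four_mul_norm_riemannZeta₁_sub_le {κ : ℝ} (hκ : 0 < κ) (hκ1 : κ ≤ 1) :
    ∃ L > 0, ∀ s w : ℂ, ∀ q ≤ κ / 4, 1 ≤ s.re → s.re ≤ 2 → ‖w - s‖ ≤ q / (height s ^ κ) ^ 5 →
      (height s ^ κ) ^ 4 * ‖riemannZeta₁ w - riemannZeta₁ s‖ ≤ L * q * height s := by
  obtain ⟨L, hL, hlip⟩ := exists_norm_riemannZeta₁_sub_le hκ hκ1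
  refine ⟨L, hL, fun s w q hq h1 h2 hws ↦ ?_⟩
  have hM : 1 ≤ height s ^ κ := one_le_height_rpow s hκ.le
  have hτ := height_pos s
  have hwκ : ‖w - s‖ ≤ κ / 4 :=
    calc ‖w - s‖ ≤ κ / 4 / (height s ^ κ) ^ 5 := hws.trans (by gcongr)
      _ ≤ κ / 4 := div_le_self (by positivity) (one_le_pow₀ hM)
  calc (height s ^ κ) ^ 4 * ‖riemannZeta₁ w - riemannZeta₁ s‖
      ≤ (height s ^ κ) ^ 4 * (L * height s ^ (1 + κ) * (q / (height s ^ κ) ^ 5)) := by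
        gcongr
        exact (hlip s w h1 h2 hwκ).trans (by gcongr)
    _ = L * q * height s := by
        rw [rpow_one_add' hτ.le (by linarith)]
        field_simp

-- Close to the line `Re s = 1` the bound is transported horizontally from the point at distance
-- `l ^ 4 / M ^ 5`, where the product inequality beats the Lipschitz bound.
lemma exists_height_le_norm_riemannZeta₁_of_one_le_abs_im {κ : ℝ} (hκ : 0 < κ) (hκ1 : κ ≤ 1) :
    ∃ c > 0, ∀ s : ℂ, 1 ≤ s.re → s.re ≤ 2 → 1 ≤ |s.im| →
      c * height s ≤ (height s ^ κ) ^ 4 * ‖riemannZeta₁ s‖ := by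
  obtain ⟨B, hB, hright⟩ := exists_cube_mul_height_le_norm_riemannZeta₁ hκ hκ1
  obtain ⟨L, hL, hlip⟩ := exists_pow_four_mul_norm_riemannZeta₁_sub_le hκ hκ1
  set l := min (κ / 4) (1 / (2 * L * B))
  have hl : 0 < l := by positivity
  have hlκ : l ≤ κ / 4 := min_le_left _ _
  have hlL : B * (L * l ^ 4) ≤ l ^ 3 / 2 :=
    calc B * (L * l ^ 4) = l ^ 3 * (L * B) * l := by ring
      _ ≤ l ^ 3 * (L * B) * (1 / (2 * L * B)) := by gcongr; exact min_le_right _ _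
      _ = l ^ 3 / 2 := by field_simp
  have hl4 : l ^ 4 ≤ κ / 4 := (pow_le_of_le_one hl.le (by linarith) four_ne_zero).trans hlκ
  refine ⟨l ^ 3 / 2 / B, by positivity, fun s h1 h2 him ↦ ?_⟩
  have hM : 1 ≤ height s ^ κ := one_le_height_rpow s hκ.le
  have hτ := height_pos s
  set M := height s ^ κ
  rw [div_mul_eq_mul_div, div_le_iff₀' (by positivity), ← mul_assoc]
  rcases le_total (l ^ 4 / M ^ 5) (s.re - 1) with hs | hs
  · refine le_trans ?_ (hright l hl s hs h2 him)
    gcongr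
    exact half_le_self (by positivity)
  have hd0 : 0 < l ^ 4 / M ^ 5 := by positivity
  have hd : l ^ 4 / M ^ 5 ≤ κ / 4 := (div_le_self (by positivity) (one_le_pow₀ hM)).trans hl4
  set w : ℂ := ⟨1 + l ^ 4 / M ^ 5, s.im⟩
  have hw : l ^ 3 * height s ≤ B * M ^ 4 * ‖riemannZeta₁ w‖ :=
    hright l hl w (add_sub_cancel_left _ _).ge (show 1 + l ^ 4 / M ^ 5 ≤ 2 by linarith) him
  have hws : ‖w - s‖ ≤ l ^ 4 / M ^ 5 := by
    have him_eq : w.im = s.im := rfl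
    rw [← dist_eq_norm, Complex.dist_of_im_eq him_eq]
    change |1 + l ^ 4 / M ^ 5 - s.re| ≤ _
    exact abs_le.mpr ⟨by linarith, by linarith⟩
  have hdiff : B * (M ^ 4 * ‖riemannZeta₁ w - riemannZeta₁ s‖) ≤ l ^ 3 / 2 * height s :=
    calc B * (M ^ 4 * ‖riemannZeta₁ w - riemannZeta₁ s‖) ≤ B * (L * l ^ 4 * height s) :=
          mul_le_mul_of_nonneg_left (hlip s w _ hl4 h1 h2 hws) (by positivity)
      _ = B * (L * l ^ 4) * height s := by ring
      _ ≤ l ^ 3 / 2 * height s := by gcongr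
  have htri : B * M ^ 4 * ‖riemannZeta₁ w‖ ≤
      B * M ^ 4 * (‖riemannZeta₁ s‖ + ‖riemannZeta₁ w - riemannZeta₁ s‖) := by
    gcongr
    exact norm_le_insert' _ _
  linarith

lemma exists_height_le_norm_riemannZeta₁ {κ : ℝ} (hκ : 0 < κ) (hκ1 : κ ≤ 1) :
    ∃ c > 0, ∀ s : ℂ, 1 ≤ s.re → s.re ≤ 2 →
      c * height s ≤ (height s ^ κ) ^ 4 * ‖riemannZeta₁ s‖ := by
  obtain ⟨c, hc, hlarge⟩ := exists_height_le_norm_riemannZeta₁_of_one_le_abs_im hκ hκ1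
  have hcompact : IsCompact (Set.Icc (1 : ℝ) 2 ×ℂ Set.Icc (-1 : ℝ) 1) :=
    isCompact_Icc.reProdIm isCompact_Icc
  obtain ⟨m, hm, hsmall⟩ := hcompact.exists_forall_le'
    differentiable_riemannZeta₁.continuous.norm.continuousOn
    (a := 0) fun s hs ↦ norm_pos_iff.mpr
      (riemannZeta₁_ne_zero_of_one_le_re (Complex.mem_reProdIm.mp hs).1.1)
  refine ⟨min c (m / 4), by positivity, fun s h1 h2 ↦ ?_⟩
  have hτ := height_pos s
  rcases le_total 1 |s.im| with him | him
  · refine le_trans ?_ (hlarge s h1 h2 him)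
    gcongr
    exact min_le_left _ _
  · calc min c (m / 4) * height s ≤ m / 4 * 4 := by
          gcongr
          · exact min_le_right _ _
          · rw [height]; linarith
      _ = 1 * m := by ring
      _ ≤ (height s ^ κ) ^ 4 * ‖riemannZeta₁ s‖ := by
          gcongr
          · exact one_le_pow₀ (one_le_height_rpow s hκ.le)
          · exact hsmall s (Complex.mem_reProdIm.mpr ⟨⟨h1, h2⟩, abs_le.mp him⟩)

lemma exists_height_le_norm_riemannZeta₁_closedBall {κ : ℝ} (hκ : 0 < κ) (hκ1 : κ ≤ 1) :
    ∃ c > 0, ∃ r > 0, ∀ s w : ℂ, 1 ≤ s.re → s.re ≤ 2 → ‖w - s‖ ≤ r / (height s ^ κ) ^ 5 →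
      c * height s ≤ (height s ^ κ) ^ 4 * ‖riemannZeta₁ w‖ := by
  obtain ⟨c, hc, hlow⟩ := exists_height_le_norm_riemannZeta₁ hκ hκ1
  obtain ⟨L, hL, hlip⟩ := exists_pow_four_mul_norm_riemannZeta₁_sub_le hκ hκ1
  refine ⟨c / 2, by positivity, min (κ / 4) (c / (2 * L)), by positivity,
    fun s w h1 h2 hws ↦ ?_⟩
  have hτ := height_pos s
  have hdiff : (height s ^ κ) ^ 4 * ‖riemannZeta₁ w - riemannZeta₁ s‖ ≤ c / 2 * height s :=
    calc (height s ^ κ) ^ 4 * ‖riemannZeta₁ w - riemannZeta₁ s‖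
        ≤ L * min (κ / 4) (c / (2 * L)) * height s := hlip s w _ (min_le_left _ _) h1 h2 hws
      _ ≤ L * (c / (2 * L)) * height s := by gcongr; exact min_le_right _ _
      _ = c / 2 * height s := by field_simp
  have htri : (height s ^ κ) ^ 4 * ‖riemannZeta₁ s‖ ≤
      (height s ^ κ) ^ 4 * (‖riemannZeta₁ w‖ + ‖riemannZeta₁ w - riemannZeta₁ s‖) := by
    gcongr
    exact norm_le_insert _ _
  linarith [hlow s h1 h2]

theorem exists_norm_iteratedDeriv_inv_riemannZeta₁_le (k : ℕ) {δ : ℝ} (hδ : 0 < δ) (hδ1 : δ ≤ 1) :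
    ∃ C > 0, ∀ s : ℂ, 1 ≤ s.re → s.re ≤ 2 →
      ‖iteratedDeriv k (fun z ↦ (riemannZeta₁ z)⁻¹) s‖ ≤ C * height s ^ (δ - 1) := by
  set κ := δ / (4 + 5 * k) with hκ
  have hκ0 : 0 < κ := by positivity
  have hκ1 : κ ≤ 1 := (div_le_self hδ.le (by linarith [k.cast_nonneg (α := ℝ)])).trans hδ1
  obtain ⟨c, hc, r, hr, hlow⟩ := exists_height_le_norm_riemannZeta₁_closedBall hκ0 hκ1
  refine ⟨k.factorial / (c * r ^ k), by positivity, fun s h1 h2 ↦ ?_⟩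
  have hτ := height_pos s
  have hM : 0 < height s ^ κ := rpow_pos_of_pos hτ κ
  set M := height s ^ κ
  have hR : 0 < r / M ^ 5 := by positivity
  have hball (w : ℂ) (hw : w ∈ Metric.closedBall s (r / M ^ 5)) :
      c * height s / M ^ 4 ≤ ‖riemannZeta₁ w‖ := by
    rw [div_le_iff₀' (by positivity)]
    exact hlow s w h1 h2 (mem_closedBall_iff_norm.mp hw)
  have hpos : 0 < c * height s / M ^ 4 := by positivity
  have hdiff : DiffContOnCl ℂ (fun z ↦ (riemannZeta₁ z)⁻¹) (Metric.ball s (r / M ^ 5)) := by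
    refine DifferentiableOn.diffContOnCl fun w hw ↦ ?_
    rw [closure_ball _ hR.ne'] at hw
    exact ((differentiable_riemannZeta₁ w).inv
      (norm_pos_iff.mp (hpos.trans_le (hball w hw)))).differentiableWithinAt
  have hexp : height s ^ (δ - 1) = M ^ (4 + 5 * k) / height s := by
    rw [rpow_sub_one hτ.ne', ← rpow_mul_natCast hτ.le]
    congr 2
    rw [hκ]
    push_cast
    field_simp
  calc ‖iteratedDeriv k (fun z ↦ (riemannZeta₁ z)⁻¹) s‖
      ≤ k.factorial * (c * height s / M ^ 4)⁻¹ / (r / M ^ 5) ^ k := by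
        refine Complex.norm_iteratedDeriv_le_of_forall_mem_sphere_norm_le k hR hdiff fun z hz ↦ ?_
        rw [norm_inv]
        exact inv_anti₀ hpos (hball z (Metric.sphere_subset_closedBall hz))
    _ = k.factorial / (c * r ^ k) * height s ^ (δ - 1) := by
        rw [hexp, pow_add, pow_mul, div_pow]
        field_simp

end ZetaLowerBound

section Plancherel

open MeasureTheory
open scoped FourierTransform SchwartzMap ContDiff

variable {V F : Type*} [NormedAddCommGroup V] [InnerProductSpace ℝ V] [FiniteDimensional ℝ V]
  [MeasurableSpace V] [BorelSpace V] [NormedAddCommGroup F] [InnerProductSpace ℂ F]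

lemma integral_norm_sq_eq_norm_sq {X : Type*} [MeasurableSpace X] {μ : Measure X} (g : Lp F 2 μ) :
    ∫ x, ‖g x‖ ^ 2 ∂μ = ‖g‖ ^ 2 := by
  have h := L2.inner_def (𝕜 := ℂ) g g
  simp_rw [inner_self_eq_norm_sq_to_K, ← RCLike.ofReal_pow, integral_ofReal] at h
  exact (RCLike.ofReal_inj.mp h).symm

variable [CompleteSpace F] {h : V → F}

lemma integral_smul_fourier_toLp (h1 : Integrable h) (h2 : MemLp h 2) (g : 𝓢(V, ℂ)) :
    ∫ x, g x • (𝓕 (h2.toLp h) : Lp F 2) x = ∫ x, g x • 𝓕 h x := by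
  have hswap : ∫ x, 𝓕 (g : V → ℂ) x • h x = ∫ x, g x • 𝓕 h x := by
    have := VectorFourier.integral_fourierIntegral_smul_eq_flip (L := innerₗ V)
      Real.continuous_fourierChar continuous_inner (g.integrable (μ := volume)) h1
    rwa [flip_innerₗ] at this
  rw [← hswap, ← Lp.toTemperedDistribution_apply, ← Lp.fourier_toTemperedDistribution_eq,
    TemperedDistribution.fourier_apply, Lp.toTemperedDistribution_apply]
  refine integral_congr_ae ?_
  filter_upwards [h2.coeFn_toLp] with x hx
  rw [hx, SchwartzMap.fourier_coe]

lemma fourier_toLp_ae_eq (h1 : Integrable h) (h2 : MemLp h 2) :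
    (𝓕 (h2.toLp h) : Lp F 2) =ᵐ[volume] 𝓕 h := by
  have hcont : Continuous (𝓕 h) :=
    VectorFourier.fourierIntegral_continuous Real.continuous_fourierChar continuous_inner h1
  refine ae_eq_of_integral_contDiff_smul_eq ((Lp.memLp _).locallyIntegrable one_le_two)
    hcont.locallyIntegrable fun g hg hsupp ↦ ?_
  have hsupp' : HasCompactSupport fun x ↦ (g x : ℂ) := hsupp.comp_left Complex.ofReal_zero
  exact integral_smul_fourier_toLp h1 h2
    (hsupp'.toSchwartzMap (Complex.ofRealCLM.contDiff.comp hg))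

theorem integral_norm_sq_fourier_eq (h1 : Integrable h) (h2 : MemLp h 2) :
    ∫ x, ‖𝓕 h x‖ ^ 2 = ∫ x, ‖h x‖ ^ 2 := by
  calc ∫ x, ‖𝓕 h x‖ ^ 2 = ∫ x, ‖(𝓕 (h2.toLp h) : Lp F 2 (volume : Measure V)) x‖ ^ 2 := by
        refine integral_congr_ae ?_
        filter_upwards [fourier_toLp_ae_eq h1 h2] with x hx
        rw [hx]
    _ = ∫ x, ‖(h2.toLp h : Lp F 2 (volume : Measure V)) x‖ ^ 2 := by
        rw [integral_norm_sq_eq_norm_sq, integral_norm_sq_eq_norm_sq, Lp.norm_fourier_eq]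
    _ = ∫ x, ‖h x‖ ^ 2 := by
        refine integral_congr_ae ?_
        filter_upwards [h2.coeFn_toLp] with x hx
        rw [hx]

end Plancherel
section MoebiusSum

open Filter

/-- The Mertens-type sum `∑_{n ≤ t} μ(n) / n`. -/
noncomputable def moebiusRecipSum (t : ℝ) : ℝ := ∑ n ∈ Ioc 0 ⌊t⌋₊, (moebius n : ℝ) / n

lemma abs_moebius_cast_le_one (n : ℕ) : |(moebius n : ℝ)| ≤ 1 :=
  mod_cast abs_moebius_le_one (n := n)

lemma ofReal_moebiusRecipSum_of_lt_one (t : ℝ) (ht : t < 1) : (moebiusRecipSum t : ℂ) = 0 := by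
  simp [moebiusRecipSum, Nat.floor_eq_zero.mpr ht]

lemma measurable_ofReal_moebiusRecipSum : Measurable fun t ↦ (moebiusRecipSum t : ℂ) :=
  (measurable_from_top (f := fun N : ℕ ↦ ((∑ n ∈ Ioc 0 N, (moebius n : ℝ) / n : ℝ) : ℂ))).comp
    Nat.measurable_floor

lemma sum_moebius_mul_div {N : ℕ} (hN : 1 ≤ N) :
    ∑ n ∈ Ioc 0 N, (moebius n : ℝ) * ((N / n : ℕ) : ℝ) = 1 := by
  have h := sum_Ioc_mul_zeta_eq_sum (R := ℤ) moebius N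
  rw [moebius_mul_coe_zeta, sum_eq_single 1 (fun b _ hb ↦ one_apply_ne hb) (by simp; lia),
    one_one] at h
  simpa only [Int.cast_sum, Int.cast_mul, Int.cast_natCast, Int.cast_one] using
    congrArg (Int.cast : ℤ → ℝ) h.symm

lemma abs_moebius_mul_div_sub_le_one (N n : ℕ) :
    |(moebius n : ℝ) * ((N : ℝ) / n - ((N / n : ℕ) : ℝ))| ≤ 1 := by
  have hlo : 0 ≤ (N : ℝ) / n - ((N / n : ℕ) : ℝ) := sub_nonneg.mpr Nat.cast_div_le
  have hhi : (N : ℝ) / n - ((N / n : ℕ) : ℝ) ≤ 1 := by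
    rw [← Nat.floor_div_eq_div (K := ℝ)]
    linarith [Nat.lt_floor_add_one ((N : ℝ) / n)]
  rw [abs_mul, abs_of_nonneg hlo]
  exact mul_le_one₀ (abs_moebius_cast_le_one n) hlo hhi

lemma abs_sum_moebius_div_le_one (N : ℕ) : |∑ n ∈ Ioc 0 N, (moebius n : ℝ) / n| ≤ 1 := by
  rcases N with - | M
  · simp
  set N := M + 1
  have hN : (0 : ℝ) < N := mod_cast M.succ_pos
  have hsplit : N * ∑ n ∈ Ioc 0 N, (moebius n : ℝ) / n =
      1 + ∑ n ∈ Ioc 0 N, (moebius n : ℝ) * ((N : ℝ) / n - ((N / n : ℕ) : ℝ)) := by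
    rw [← sum_moebius_mul_div M.succ_pos, ← sum_add_distrib, mul_sum]
    exact sum_congr rfl fun n _ ↦ by ring
  -- The term `n = N` vanishes, which is what makes the bound exactly `1`.
  have herr : |∑ n ∈ Ioc 0 N, (moebius n : ℝ) * ((N : ℝ) / n - ((N / n : ℕ) : ℝ))| ≤ M := by
    rw [sum_Ioc_succ_top M.zero_le, Nat.div_self M.succ_pos, div_self hN.ne', Nat.cast_one,
      sub_self, mul_zero, add_zero]
    refine (abs_sum_le_sum_abs _ _).trans ?_
    refine (sum_le_card_nsmul _ _ 1 fun n _ ↦ abs_moebius_mul_div_sub_le_one N n).trans ?_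
    simp
  have hMN : (N : ℝ) = M + 1 := Nat.cast_succ M
  refine le_of_mul_le_mul_left ?_ hN
  calc N * |∑ n ∈ Ioc 0 N, (moebius n : ℝ) / n|
      = |1 + ∑ n ∈ Ioc 0 N, (moebius n : ℝ) * ((N : ℝ) / n - ((N / n : ℕ) : ℝ))| := by
        rw [← hsplit, abs_mul, abs_of_pos hN]
    _ ≤ 1 + M := (abs_add_le _ _).trans (by rw [abs_one]; gcongr)
    _ = N * 1 := by rw [hMN]; ring

lemma abs_moebiusRecipSum_le_one (t : ℝ) : |moebiusRecipSum t| ≤ 1 :=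
  abs_sum_moebius_div_le_one _

lemma norm_ofReal_moebiusRecipSum_le_one (t : ℝ) : ‖(moebiusRecipSum t : ℂ)‖ ≤ 1 := by
  rw [Complex.norm_real]
  exact abs_moebiusRecipSum_le_one t

lemma mellin_moebiusRecipSum {w : ℂ} (hw : 0 < w.re) :
    mellin (fun t ↦ (moebiusRecipSum t : ℂ)) (-w) = (riemannZeta₁ (1 + w))⁻¹ := by
  have hw0 : w ≠ 0 := fun h ↦ by simp [h] at hw
  have hw1 : 1 < (1 + w).re := by simpa using hw
  have hterm : LSeries.term (fun n ↦ (moebius n : ℂ) / n) w =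
      LSeries.term (fun n ↦ (moebius n : ℂ)) (1 + w) := by
    ext n
    rcases eq_or_ne n 0 with rfl | hn
    · simp
    · have hn' : (n : ℂ) ≠ 0 := mod_cast hn
      rw [LSeries.term_of_ne_zero hn, LSeries.term_of_ne_zero hn, Complex.cpow_add _ _ hn',
        Complex.cpow_one, div_div]
  have hsummable : LSeriesSummable (fun n ↦ (moebius n : ℂ) / n) w := by
    rw [LSeriesSummable, hterm]
    exact LSeriesSummable_moebius_iff.mpr hw1
  have hcast (N : ℕ) : ∑ n ∈ Ioc 0 N, (moebius n : ℂ) / n =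
      ((∑ n ∈ Ioc 0 N, (moebius n : ℝ) / n : ℝ) : ℂ) := by push_cast; rfl
  have hmellin : LSeries (fun n ↦ (moebius n : ℂ)) (1 + w) =
      w * mellin (fun t ↦ (moebiusRecipSum t : ℂ)) (-w) := by
    have h := LSeries_eq_mul_mellin _ le_rfl hw hsummable
      (.of_bound 1 (.of_forall fun N ↦ by
        simpa [hcast, -Complex.ofReal_sum] using abs_sum_moebius_div_le_one N))
    simp only [hcast] at h
    rwa [LSeries, hterm] at h
  have hinv := LSeries_zeta_mul_Lseries_moebius hw1
  rw [LSeries_zeta_eq_riemannZeta hw1, hmellin] at hinv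
  rw [riemannZeta₁_eq_sub_one_mul (by simpa using hw0), add_sub_cancel_left]
  exact eq_inv_of_mul_eq_one_left (by linear_combination hinv)

lemma sum_inv_Ioc_le_inv_add_log_sub {M N : ℕ} (h : M + 1 ≤ N) :
    ∑ n ∈ Ioc M N, (n : ℝ)⁻¹ ≤ ((M : ℝ) + 1)⁻¹ + (Real.log N - Real.log (M + 1)) := by
  induction N, h using Nat.le_induction with
  | base => simp
  | succ N hN ih =>
    have hN0 : (0 : ℝ) < N := mod_cast (by lia : 0 < N)
    have hlog := Real.one_sub_inv_le_log_of_pos (x := ((N : ℝ) + 1) / N) (by positivity)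
    rw [Real.log_div (by positivity) (by positivity)] at hlog
    have hinv : 1 - (((N : ℝ) + 1) / N)⁻¹ = ((N : ℝ) + 1)⁻¹ := by field_simp; ring
    rw [sum_Ioc_succ_top (by lia)]
    push_cast
    linarith

lemma abs_moebiusRecipSum_exp_sub_le {u v : ℝ} (hu : 0 ≤ u) (huv : u ≤ v) :
    |moebiusRecipSum (Real.exp v) - moebiusRecipSum (Real.exp u)| ≤ v - u + Real.exp (-u) := by
  have hu0 : 0 < ⌊Real.exp u⌋₊ := Nat.floor_pos.mpr (Real.one_le_exp hu)
  have hfloor : ⌊Real.exp u⌋₊ ≤ ⌊Real.exp v⌋₊ := Nat.floor_mono (Real.exp_le_exp.mpr huv)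
  rcases hfloor.eq_or_lt with heq | hlt
  · rw [moebiusRecipSum, moebiusRecipSum, heq, sub_self, abs_zero]
    linarith [Real.exp_pos (-u)]
  have hterm (n : ℕ) : |(moebius n : ℝ) / n| ≤ (n : ℝ)⁻¹ := by
    rw [abs_div, Nat.abs_cast, div_eq_mul_inv]
    exact mul_le_of_le_one_left (by positivity) (abs_moebius_cast_le_one n)
  have hM : Real.exp u ≤ ⌊Real.exp u⌋₊ + 1 := (Nat.lt_floor_add_one _).le
  have hlogM : u ≤ Real.log (⌊Real.exp u⌋₊ + 1) := by
    simpa using Real.log_le_log (Real.exp_pos u) hM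
  have hlogN : Real.log ⌊Real.exp v⌋₊ ≤ v := by
    simpa using Real.log_le_log (mod_cast hu0.trans hlt) (Nat.floor_le (Real.exp_pos v).le)
  have hinv : ((⌊Real.exp u⌋₊ : ℝ) + 1)⁻¹ ≤ Real.exp (-u) := by
    rw [Real.exp_neg]
    gcongr
  calc |moebiusRecipSum (Real.exp v) - moebiusRecipSum (Real.exp u)|
      = |∑ n ∈ Ioc ⌊Real.exp u⌋₊ ⌊Real.exp v⌋₊, (moebius n : ℝ) / n| := by
        rw [moebiusRecipSum, moebiusRecipSum, ← sum_Ioc_consecutive _ (Nat.zero_le _) hfloor,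
          add_sub_cancel_left]
    _ ≤ ∑ n ∈ Ioc ⌊Real.exp u⌋₊ ⌊Real.exp v⌋₊, (n : ℝ)⁻¹ :=
        (abs_sum_le_sum_abs _ _).trans (sum_le_sum fun n _ ↦ hterm n)
    _ ≤ v - u + Real.exp (-u) := by
        linarith [sum_inv_Ioc_le_inv_add_log_sub hlt]

end MoebiusSum

section MellinPlancherel

open MeasureTheory
open scoped FourierTransform

variable {f : ℝ → ℂ} {C ε : ℝ}

/-- The function whose Fourier transform is the Mellin transform of `log ^ k • f` on the line
`re s = -ε`, namely `log ^ k • f` in the variable `t = exp (-u)`, damped by `exp (ε * u)`. -/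
noncomputable def dampedLogPow (f : ℝ → ℂ) (k : ℕ) (ε u : ℝ) : ℂ :=
  Real.exp (ε * u) • Real.log (Real.exp (-u)) ^ k • f (Real.exp (-u))

lemma measurable_dampedLogPow (hf : Measurable f) (k : ℕ) (ε : ℝ) :
    Measurable (dampedLogPow f k ε) := by
  unfold dampedLogPow
  fun_prop

lemma norm_dampedLogPow (f : ℝ → ℂ) (k : ℕ) (ε u : ℝ) :
    ‖dampedLogPow f k ε u‖ = Real.exp (ε * u) * (|u| ^ k * ‖f (Real.exp (-u))‖) := by
  rw [dampedLogPow, norm_smul, norm_smul, norm_pow, Real.log_exp, Real.norm_eq_abs,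
    Real.norm_eq_abs, abs_neg, abs_of_pos (Real.exp_pos _)]

lemma norm_dampedLogPow_le (hC : ∀ t, ‖f t‖ ≤ C) (h0 : ∀ t < 1, f t = 0) (k : ℕ) (hε : 0 < ε)
    (u : ℝ) : ‖dampedLogPow f k ε u‖ ≤
      (Set.Iic 0).indicator (fun u ↦ k.factorial / (ε / 2) ^ k * C * Real.exp (ε / 2 * u)) u := by
  by_cases hu : u ∈ Set.Iic (0 : ℝ)
  · have hu0 : u ≤ 0 := hu
    have hpow : |u| ^ k ≤ k.factorial / (ε / 2) ^ k * Real.exp (-(ε / 2 * u)) := by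
      have h := Real.pow_div_factorial_le_exp (ε / 2 * |u|) (by positivity) k
      rw [div_le_iff₀ (by positivity), mul_pow] at h
      rw [div_mul_eq_mul_div, le_div_iff₀ (by positivity), ← mul_neg, ← abs_of_nonpos hu0]
      linarith
    rw [Set.indicator_of_mem hu, norm_dampedLogPow]
    calc Real.exp (ε * u) * (|u| ^ k * ‖f (Real.exp (-u))‖)
        ≤ Real.exp (ε * u) * (k.factorial / (ε / 2) ^ k * Real.exp (-(ε / 2 * u)) * C) := by
          gcongr
          exact hC _
      _ = k.factorial / (ε / 2) ^ k * C * Real.exp (ε * u + -(ε / 2 * u)) := by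
          rw [Real.exp_add]
          ring
      _ = k.factorial / (ε / 2) ^ k * C * Real.exp (ε / 2 * u) := by ring_nf
  · have hlt : Real.exp (-u) < 1 := by simpa using hu
    rw [Set.indicator_of_notMem hu, norm_dampedLogPow, h0 _ hlt]
    simp

lemma integrable_dampedLogPow (hf : Measurable f) (hC : ∀ t, ‖f t‖ ≤ C) (h0 : ∀ t < 1, f t = 0)
    (k : ℕ) (hε : 0 < ε) : Integrable (dampedLogPow f k ε) := by
  have hexp : IntegrableOn (fun u ↦ k.factorial / (ε / 2) ^ k * C * Real.exp (ε / 2 * u))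
      (Set.Iic 0) := (integrableOn_exp_mul_Iic (half_pos hε) 0).const_mul _
  exact (hexp.integrable_indicator measurableSet_Iic).mono'
    (measurable_dampedLogPow hf k ε).aestronglyMeasurable
    (.of_forall (norm_dampedLogPow_le hC h0 k hε))

lemma memLp_two_dampedLogPow (hf : Measurable f) (hC : ∀ t, ‖f t‖ ≤ C) (h0 : ∀ t < 1, f t = 0)
    (k : ℕ) (hε : 0 < ε) : MemLp (dampedLogPow f k ε) 2 := by
  have hC0 : 0 ≤ C := (norm_nonneg _).trans (hC 0)
  have hmeas := (measurable_dampedLogPow hf k ε).aestronglyMeasurable (μ := volume)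
  have hbound (u : ℝ) : ‖dampedLogPow f k ε u‖ ≤ k.factorial / (ε / 2) ^ k * C := by
    refine (norm_dampedLogPow_le hC h0 k hε u).trans
      (Set.indicator_apply_le' (fun hu ↦ ?_) fun _ ↦ by positivity)
    have hexp : Real.exp (ε / 2 * u) ≤ 1 :=
      Real.exp_le_one_iff.mpr (mul_nonpos_of_nonneg_of_nonpos (half_pos hε).le hu)
    exact mul_le_of_le_one_right (by positivity) hexp
  refine (memLp_two_iff_integrable_sq_norm hmeas).mpr ?_
  simp_rw [sq]
  exact (integrable_dampedLogPow hf hC h0 k hε).norm.bdd_mul hmeas.norm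
    (.of_forall fun u ↦ by rw [norm_norm]; exact hbound u)

lemma fourier_dampedLogPow (hf : Measurable f) (hC : ∀ t, ‖f t‖ ≤ C) (h0 : ∀ t < 1, f t = 0)
    (k : ℕ) (hε : 0 < ε) (ξ : ℝ) :
    𝓕 (dampedLogPow f k ε) ξ = iteratedDeriv k (mellin f) ⟨-ε, 2 * π * ξ⟩ := by
  have hξ : 2 * π * ξ / (2 * π) = ξ := by field_simp
  rw [iteratedDeriv_mellin_of_bounded hf hC h0 k (by simpa using hε), mellin_eq_fourier]
  simp only [neg_neg, hξ]
  rfl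

theorem integral_norm_sq_iteratedDeriv_mellin (hf : Measurable f) (hC : ∀ t, ‖f t‖ ≤ C)
    (h0 : ∀ t < 1, f t = 0) (k : ℕ) (hε : 0 < ε) :
    ∫ ξ : ℝ, ‖iteratedDeriv k (mellin f) ⟨-ε, 2 * π * ξ⟩‖ ^ 2 =
      ∫ u, ‖dampedLogPow f k ε u‖ ^ 2 := by
  simp_rw [← fourier_dampedLogPow hf hC h0 k hε]
  exact integral_norm_sq_fourier_eq (integrable_dampedLogPow hf hC h0 k hε)
    (memLp_two_dampedLogPow hf hC h0 k hε)

end MellinPlancherel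

section MoebiusSumBound

open MeasureTheory Filter Topology

lemma norm_iteratedDeriv_mellin_moebiusRecipSum (k : ℕ) {s : ℂ} (hs : s.re < 0) :
    ‖iteratedDeriv k (mellin fun t ↦ (moebiusRecipSum t : ℂ)) s‖ =
      ‖iteratedDeriv k (fun z ↦ (riemannZeta₁ z)⁻¹) (1 - s)‖ := by
  have hnhds : {z : ℂ | z.re < 0} ∈ 𝓝 s :=
    (isOpen_lt Complex.continuous_re continuous_const).mem_nhds hs
  have heq : (mellin fun t ↦ (moebiusRecipSum t : ℂ)) =ᶠ[𝓝 s]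
      fun z ↦ (riemannZeta₁ (1 - z))⁻¹ := by
    refine mem_of_superset hnhds fun z (hz : z.re < 0) ↦ ?_
    have h := mellin_moebiusRecipSum (w := -z) (by simpa using hz)
    rwa [neg_neg, ← sub_eq_add_neg] at h
  rw [heq.iteratedDeriv_eq, iteratedDeriv_comp_const_sub k (fun z ↦ (riemannZeta₁ z)⁻¹)]
  simp

lemma exists_integral_norm_sq_dampedLogPow_moebiusRecipSum_le (k : ℕ) :
    ∃ K, ∀ ε : ℝ, 0 < ε → ε ≤ 1 →
      ∫ u, ‖dampedLogPow (fun t ↦ (moebiusRecipSum t : ℂ)) k ε u‖ ^ 2 ≤ K := by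
  obtain ⟨C, hC, hbound⟩ :=
    exists_norm_iteratedDeriv_inv_riemannZeta₁_le k (δ := 1 / 4) (by norm_num) (by norm_num)
  have hint : Integrable fun ξ : ℝ ↦ C ^ 2 * (1 + ‖ξ‖) ^ (-(3 / 2) : ℝ) :=
    (integrable_one_add_norm (by simp; norm_num)).const_mul _
  refine ⟨∫ ξ : ℝ, C ^ 2 * (1 + ‖ξ‖) ^ (-(3 / 2) : ℝ), fun ε hε hε1 ↦ ?_⟩
  rw [← integral_norm_sq_iteratedDeriv_mellin measurable_ofReal_moebiusRecipSum
    norm_ofReal_moebiusRecipSum_le_one ofReal_moebiusRecipSum_of_lt_one k hε]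
  refine integral_mono_of_nonneg (.of_forall fun _ ↦ by positivity) hint (.of_forall fun ξ ↦ ?_)
  beta_reduce
  rw [norm_iteratedDeriv_mellin_moebiusRecipSum k (by simpa using hε)]
  set s : ℂ := 1 - ⟨-ε, 2 * π * ξ⟩ with hs
  have hre : s.re = 1 + ε := by simp [hs]
  have him : |s.im| = 2 * π * |ξ| := by simp [hs, abs_mul, abs_of_pos pi_pos]
  have hheight : 1 + ‖ξ‖ ≤ height s := by
    rw [height, him, Real.norm_eq_abs]
    nlinarith [Real.pi_gt_three, abs_nonneg ξ]
  calc ‖iteratedDeriv k (fun z ↦ (riemannZeta₁ z)⁻¹) s‖ ^ 2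
      ≤ (C * height s ^ (1 / 4 - 1 : ℝ)) ^ 2 := by
        gcongr
        exact hbound s (by linarith) (by linarith)
    _ ≤ (C * (1 + ‖ξ‖) ^ (1 / 4 - 1 : ℝ)) ^ 2 := by
        have hrpow := Real.rpow_le_rpow_of_nonpos (by positivity) hheight
          (show (1 / 4 - 1 : ℝ) ≤ 0 by norm_num)
        have := height_pos s
        gcongr
    _ = C ^ 2 * (1 + ‖ξ‖) ^ (-(3 / 2) : ℝ) := by
        rw [mul_pow, ← Real.rpow_mul_natCast (by positivity)]
        norm_num

lemma le_norm_dampedLogPow_moebiusRecipSum {u v : ℝ} (hu : 1 ≤ u) (k : ℕ)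
    (hexp : Real.exp (-u) ≤ |moebiusRecipSum (Real.exp u)| / 8) (huv : u ≤ v)
    (hv : v ≤ u + |moebiusRecipSum (Real.exp u)| / 4) :
    Real.exp (-2) * (u ^ k * (|moebiusRecipSum (Real.exp u)| / 2)) ≤
      ‖dampedLogPow (fun t ↦ (moebiusRecipSum t : ℂ)) k (1 / u) (-v)‖ := by
  set η := |moebiusRecipSum (Real.exp u)|
  have hη1 : η ≤ 1 := abs_moebiusRecipSum_le_one _
  have hu0 : 0 < u := one_pos.trans_le hu
  have hdamp : Real.exp (-2) ≤ Real.exp (1 / u * -v) := by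
    rw [Real.exp_le_exp, div_mul_eq_mul_div, le_div_iff₀ hu0]
    linarith
  have hslow : η / 2 ≤ |moebiusRecipSum (Real.exp v)| := by
    have h1 := abs_moebiusRecipSum_exp_sub_le hu0.le huv
    have h2 := abs_sub_abs_le_abs_sub (moebiusRecipSum (Real.exp u)) (moebiusRecipSum (Real.exp v))
    rw [abs_sub_comm] at h2
    linarith
  rw [norm_dampedLogPow, neg_neg, abs_neg, abs_of_pos (hu0.trans_le huv), Complex.norm_real,
    Real.norm_eq_abs]
  have hv0 : 0 ≤ v := hu0.le.trans huv
  gcongr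

-- `M(exp v)` varies slowly, so a large value at `v = u` persists on an interval of length
-- comparable to `|M(exp u)|`, where the damping factor `exp (-v / u)` is bounded below.
lemma mul_abs_moebiusRecipSum_exp_cube_le_integral {u : ℝ} (hu : 1 ≤ u) (k : ℕ)
    (hexp : Real.exp (-u) ≤ |moebiusRecipSum (Real.exp u)| / 8) :
    Real.exp (-2) ^ 2 / 16 * u ^ (2 * k) * |moebiusRecipSum (Real.exp u)| ^ 3 ≤
      ∫ v, ‖dampedLogPow (fun t ↦ (moebiusRecipSum t : ℂ)) k (1 / u) v‖ ^ 2 := by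
  set η := |moebiusRecipSum (Real.exp u)|
  set h := dampedLogPow (fun t ↦ (moebiusRecipSum t : ℂ)) k (1 / u)
  have hint : Integrable fun v ↦ ‖h v‖ ^ 2 :=
    (memLp_two_dampedLogPow measurable_ofReal_moebiusRecipSum norm_ofReal_moebiusRecipSum_le_one
      ofReal_moebiusRecipSum_of_lt_one k (by positivity)).integrable_norm_pow two_ne_zero
  have hpointwise : ∀ v ∈ Set.Icc (-(u + η / 4)) (-u),
      (Real.exp (-2) * (u ^ k * (η / 2))) ^ 2 ≤ ‖h v‖ ^ 2 := fun v hv ↦ by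
    have h := le_norm_dampedLogPow_moebiusRecipSum hu k hexp (v := -v) (by linarith [hv.2])
      (by linarith [hv.1])
    rw [neg_neg] at h
    gcongr
  calc Real.exp (-2) ^ 2 / 16 * u ^ (2 * k) * η ^ 3
      = (Real.exp (-2) * (u ^ k * (η / 2))) ^ 2 * volume.real (Set.Icc (-(u + η / 4)) (-u)) := by
        rw [Real.volume_real_Icc_of_le (by linarith [abs_nonneg (moebiusRecipSum (Real.exp u))])]
        ring
    _ ≤ ∫ v in Set.Icc (-(u + η / 4)) (-u), ‖h v‖ ^ 2 :=
        setIntegral_ge_of_const_le_real measurableSet_Icc measure_Icc_lt_top.ne hpointwise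
          hint.integrableOn
    _ ≤ ∫ v, ‖h v‖ ^ 2 := setIntegral_le_integral hint (.of_forall fun _ ↦ by positivity)

lemma exists_abs_moebiusRecipSum_exp_mul_pow_le (A : ℕ) :
    ∃ D ≥ 1, ∀ u : ℝ, 1 ≤ u → |moebiusRecipSum (Real.exp u)| * u ^ A ≤ D := by
  obtain ⟨K, hK⟩ := exists_integral_norm_sq_dampedLogPow_moebiusRecipSum_le (3 * A)
  have hK0 : 0 ≤ K := (integral_nonneg fun _ ↦ by positivity).trans (hK 1 one_pos le_rfl)
  set L := 16 * K / Real.exp (-2) ^ 2 with hL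
  refine ⟨1 + 8 * A.factorial + L, ?_, fun u hu ↦ ?_⟩
  · have : 0 ≤ 8 * (A.factorial : ℝ) + L := by positivity
    linarith
  have hu0 : 0 < u := one_pos.trans_le hu
  have hL0 : 0 ≤ L := by positivity
  set η := |moebiusRecipSum (Real.exp u)|
  rcases le_or_gt (Real.exp (-u)) (η / 8) with hexp | hexp
  · have hcube : (η * u ^ A) ^ 3 ≤ L := by
      have h := (mul_abs_moebiusRecipSum_exp_cube_le_integral hu (3 * A) hexp).trans
        (hK (1 / u) (by positivity) ((div_le_one hu0).mpr hu))
      calc (η * u ^ A) ^ 3 = η ^ 3 * u ^ (3 * A) := by ring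
        _ ≤ η ^ 3 * u ^ (2 * (3 * A)) := by
            gcongr ?_ * ?_
            exact pow_le_pow_right₀ hu (by lia)
        _ ≤ L := by
            rw [hL, le_div_iff₀ (by positivity)]
            linarith
    have hle : η * u ^ A ≤ 1 + L := by
      refine le_of_pow_le_pow_left₀ three_ne_zero (by positivity) (hcube.trans ?_)
      nlinarith [pow_nonneg hL0 2, pow_nonneg hL0 3]
    have : 0 ≤ 8 * (A.factorial : ℝ) := by positivity
    linarith
  · have hfact := Real.pow_div_factorial_le_exp u hu0.le A
    rw [div_le_iff₀ (by positivity)] at hfact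
    calc η * u ^ A ≤ 8 * Real.exp (-u) * (Real.exp u * A.factorial) := by
          gcongr
          linarith
      _ = 8 * A.factorial := by
          rw [Real.exp_neg]
          field_simp
      _ ≤ 1 + 8 * A.factorial + L := by linarith

theorem exists_abs_moebiusRecipSum_le (A : ℕ) :
    ∃ D > 0, ∀ t : ℝ, 2 ≤ t → |moebiusRecipSum t| ≤ D / Real.log t ^ A := by
  obtain ⟨D, hD, hbound⟩ := exists_abs_moebiusRecipSum_exp_mul_pow_le A
  refine ⟨D, by positivity, fun t ht ↦ ?_⟩
  have hlog : 0 < Real.log t := Real.log_pos (by linarith)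
  rw [le_div_iff₀ (by positivity)]
  rcases le_total 1 (Real.log t) with hlog1 | hlog1
  · simpa only [Real.exp_log (show 0 < t by linarith)] using hbound _ hlog1
  · calc |moebiusRecipSum t| * Real.log t ^ A ≤ 1 * 1 := by
          gcongr
          · exact abs_moebiusRecipSum_le_one t
          · exact pow_le_one₀ hlog.le hlog1
      _ ≤ D := by linarith

end MoebiusSumBound

section SmoothNumbers

/-- The finite Euler product `∏_{p ∈ P} (1 - p^{-σ})⁻¹`, which equals `∑ n^{-σ}` over the integers
`n` composed only of primes of `P`. -/
noncomputable def finiteEulerProduct (P : Finset ℕ) (σ : ℝ) : ℝ :=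
  ∏ p ∈ P with p.Prime, (1 - (p : ℝ) ^ (-σ))⁻¹

lemma prime_rpow_neg_lt_one {p : ℕ} (hp : p.Prime) {σ : ℝ} (hσ : 0 < σ) : (p : ℝ) ^ (-σ) < 1 :=
  rpow_lt_one_of_one_lt_of_neg (mod_cast hp.one_lt) (neg_neg_of_pos hσ)

lemma hasSum_factoredNumbers_rpow_neg (P : Finset ℕ) {σ : ℝ} (hσ : 0 < σ) :
    HasSum (fun n : Nat.factoredNumbers P ↦ ((n : ℕ) : ℝ) ^ (-σ)) (finiteEulerProduct P σ) := by
  let f : ℕ →* ℝ :=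
    { toFun := fun n ↦ (n : ℝ) ^ (-σ)
      map_one' := by simp
      map_mul' := fun m n ↦ by rw [Nat.cast_mul, mul_rpow m.cast_nonneg n.cast_nonneg] }
  refine (EulerProduct.summable_and_hasSum_factoredNumbers_prod_filter_prime_geometric
    (f := f) (fun {p} hp ↦ ?_) P).2
  change ‖(p : ℝ) ^ (-σ)‖ < 1
  rw [norm_of_nonneg (rpow_nonneg p.cast_nonneg _)]
  exact prime_rpow_neg_lt_one hp hσ

lemma sum_rpow_neg_le_finiteEulerProduct {P S : Finset ℕ} {σ : ℝ} (hσ : 0 < σ)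
    (hS : ∀ n ∈ S, n ∈ Nat.factoredNumbers P) :
    ∑ n ∈ S, (n : ℝ) ^ (-σ) ≤ finiteEulerProduct P σ := by
  rw [← S.sum_subtype_of_mem (fun n : ℕ ↦ (n : ℝ) ^ (-σ)) hS]
  exact sum_le_hasSum _ (fun n _ ↦ rpow_nonneg (Nat.cast_nonneg _) _)
    (hasSum_factoredNumbers_rpow_neg P hσ)

lemma finiteEulerProduct_nonneg (P : Finset ℕ) {σ : ℝ} (hσ : 0 < σ) :
    0 ≤ finiteEulerProduct P σ :=
  sum_rpow_neg_le_finiteEulerProduct (S := ∅) hσ (by simp)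

/-- Rankin's trick: on `n > Z`, each `n⁻¹` is at most `Z ^ (-δ) * n ^ (δ - 1)`. -/
lemma sum_inv_le_rpow_mul_finiteEulerProduct {P S : Finset ℕ} {δ Z : ℝ} (hδ : 0 ≤ δ) (hδ1 : δ < 1)
    (hZ : 0 < Z) (hS : ∀ n ∈ S, n ∈ Nat.factoredNumbers P) (hSZ : ∀ n ∈ S, Z ≤ n) :
    ∑ n ∈ S, (n : ℝ)⁻¹ ≤ Z ^ (-δ) * finiteEulerProduct P (1 - δ) := by
  refine le_trans ?_ (mul_le_mul_of_nonneg_left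
    (sum_rpow_neg_le_finiteEulerProduct (by linarith) hS) (rpow_nonneg hZ.le _))
  rw [mul_sum]
  refine sum_le_sum fun n hn ↦ ?_
  have hn0 : (0 : ℝ) < n := hZ.trans_le (hSZ n hn)
  calc (n : ℝ)⁻¹ = (n : ℝ) ^ (-δ) * (n : ℝ) ^ (-(1 - δ)) := by
        rw [← rpow_add hn0, ← rpow_neg_one]; ring_nf
    _ ≤ Z ^ (-δ) * (n : ℝ) ^ (-(1 - δ)) := mul_le_mul_of_nonneg_right
        (rpow_le_rpow_of_nonpos hZ (hSZ n hn) (neg_nonpos.mpr hδ)) (rpow_nonneg hn0.le _)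

lemma card_le_rpow_mul_finiteEulerProduct {P S : Finset ℕ} {σ X : ℝ} (hσ : 0 < σ)
    (hS : ∀ n ∈ S, n ∈ Nat.factoredNumbers P) (hX : 0 ≤ X) (hSX : ∀ n ∈ S, (n : ℝ) ≤ X) :
    (#S : ℝ) ≤ X ^ σ * finiteEulerProduct P σ := by
  refine le_trans ?_ (mul_le_mul_of_nonneg_left
    (sum_rpow_neg_le_finiteEulerProduct hσ hS) (rpow_nonneg hX _))
  rw [mul_sum, card_eq_sum_ones, Nat.cast_sum, Nat.cast_one]
  refine sum_le_sum fun n hn ↦ ?_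
  have hn0 : (0 : ℝ) < n := mod_cast Nat.pos_of_ne_zero (hS n hn).1
  rw [rpow_neg hn0.le, ← div_eq_mul_inv, one_le_div (rpow_pos_of_pos hn0 _)]
  gcongr
  exact hSX n hn

lemma tsum_rpow_neg_le {s : ℝ} (hs : 1 < s) :
    ∑' n : ℕ, (n : ℝ) ^ (-s) ≤ 1 + (s - 1)⁻¹ := by
  have hsum : Summable fun n : ℕ ↦ (n : ℝ) ^ (-s) := summable_nat_rpow.mpr (by linarith)
  have hterm : 0 ≤ ZetaAsymptotics.termTSum s :=
    tsum_nonneg fun n ↦ ZetaAsymptotics.term_nonneg (n + 1) s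
  have hzeta := ZetaAsymptotics.zeta_limit_aux1 hs
  rw [hsum.tsum_eq_zero_add, Nat.cast_zero, zero_rpow (by linarith), zero_add]
  have hshift : ∑' n : ℕ, ((n + 1 : ℕ) : ℝ) ^ (-s) = ∑' n : ℕ, 1 / ((n : ℝ) + 1) ^ s :=
    tsum_congr fun n ↦ by rw [rpow_neg (by positivity), one_div, Nat.cast_succ]
  rw [hshift, inv_eq_one_div]
  nlinarith

lemma sum_prime_rpow_neg_le_log {P : Finset ℕ} (hP : ∀ p ∈ P, p.Prime) {s : ℝ} (hs : 1 < s) :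
    ∑ p ∈ P, (p : ℝ) ^ (-s) ≤ Real.log (1 + (s - 1)⁻¹) := by
  have hs0 : 0 < s := by linarith
  have hpos : ∀ p ∈ P, 0 < 1 - (p : ℝ) ^ (-s) := fun p hp ↦
    sub_pos.mpr (prime_rpow_neg_lt_one (hP p hp) hs0)
  have hprod : finiteEulerProduct P s ≤ 1 + (s - 1)⁻¹ := by
    have hsum : Summable fun n : ℕ ↦ (n : ℝ) ^ (-s) := summable_nat_rpow.mpr (by linarith)
    rw [← (hasSum_factoredNumbers_rpow_neg P hs0).tsum_eq]
    exact (hsum.tsum_subtype_le _ _ fun n ↦ rpow_nonneg n.cast_nonneg _).trans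
      (tsum_rpow_neg_le hs)
  have hfilter : P.filter Nat.Prime = P := filter_true_of_mem hP
  rw [finiteEulerProduct, hfilter] at hprod
  calc ∑ p ∈ P, (p : ℝ) ^ (-s)
      ≤ ∑ p ∈ P, Real.log (1 - (p : ℝ) ^ (-s))⁻¹ := sum_le_sum fun p hp ↦ by
        rw [log_inv]; linarith [log_le_sub_one_of_pos (hpos p hp)]
    _ = Real.log (∏ p ∈ P, (1 - (p : ℝ) ^ (-s))⁻¹) :=
        (log_prod fun p hp ↦ (inv_pos.mpr (hpos p hp)).ne').symm
    _ ≤ Real.log (1 + (s - 1)⁻¹) :=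
        log_le_log (prod_pos fun p hp ↦ inv_pos.mpr (hpos p hp)) hprod

lemma rpow_inv_log_le_exp_one {N p : ℕ} (hN : 2 ≤ N) (hpN : p ≤ N) :
    (p : ℝ) ^ (Real.log N)⁻¹ ≤ exp 1 := by
  have hlog : 0 < Real.log N := log_pos (mod_cast hN)
  calc (p : ℝ) ^ (Real.log N)⁻¹ ≤ (N : ℝ) ^ (Real.log N)⁻¹ := by gcongr
    _ = exp 1 := rpow_inv_log (by positivity) (by exact_mod_cast (by lia : N ≠ 1))

lemma sum_inv_primesLE_le {N : ℕ} (hN : 2 ≤ N) :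
    ∑ p ∈ N.primesLE, (p : ℝ)⁻¹ ≤ exp 1 * Real.log (1 + Real.log N) := by
  have hlog : 0 < Real.log N := log_pos (mod_cast hN)
  have hprime : ∀ p ∈ N.primesLE, p.Prime := fun _ ↦ Nat.prime_of_mem_primesLE
  have hbound := sum_prime_rpow_neg_le_log hprime (lt_add_of_pos_right 1 (inv_pos.mpr hlog))
  rw [add_sub_cancel_left, inv_inv] at hbound
  refine le_trans ?_ (mul_le_mul_of_nonneg_left hbound (exp_pos 1).le)
  rw [mul_sum]
  refine sum_le_sum fun p hp ↦ ?_
  have hp0 : (0 : ℝ) < p := mod_cast (hprime p hp).pos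
  calc (p : ℝ)⁻¹ = (p : ℝ) ^ (Real.log N)⁻¹ * (p : ℝ) ^ (-(1 + (Real.log N)⁻¹)) := by
        rw [← rpow_add hp0, ← rpow_neg_one]; ring_nf
    _ ≤ exp 1 * (p : ℝ) ^ (-(1 + (Real.log N)⁻¹)) := by
        gcongr; exact rpow_inv_log_le_exp_one hN (Nat.le_of_mem_primesLE hp)

lemma two_rpow_neg_half_le : (2 : ℝ) ^ (-(1 / 2 : ℝ)) ≤ 3 / 4 := by
  rw [rpow_neg zero_le_two, ← sqrt_eq_rpow]
  refine inv_le_of_inv_le₀ (by norm_num) (le_sqrt_of_sq_le (by norm_num))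

lemma prime_rpow_neg_le_three_quarters {p : ℕ} (hp : p.Prime) {σ : ℝ} (hσ : 1 / 2 ≤ σ) :
    (p : ℝ) ^ (-σ) ≤ 3 / 4 :=
  calc (p : ℝ) ^ (-σ) ≤ 2 ^ (-σ) :=
        rpow_le_rpow_of_nonpos two_pos (mod_cast hp.two_le) (by linarith)
    _ ≤ 2 ^ (-(1 / 2 : ℝ)) := rpow_le_rpow_of_exponent_le one_le_two (by linarith)
    _ ≤ 3 / 4 := two_rpow_neg_half_le

lemma inv_one_sub_le_exp {t : ℝ} (ht0 : 0 ≤ t) (ht : t ≤ 3 / 4) : (1 - t)⁻¹ ≤ exp (4 * t) := by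
  have hpos : 0 < 1 - t := by linarith
  rw [← exp_log (inv_pos.mpr hpos), exp_le_exp, log_inv]
  have hlog := one_sub_inv_le_log_of_pos hpos
  have hinv : (1 - t)⁻¹ ≤ 1 + 4 * t := by
    rw [inv_le_comm₀ hpos (by linarith), inv_le_iff_one_le_mul₀ (by linarith)]
    nlinarith
  linarith

lemma finiteEulerProduct_le_exp (P : Finset ℕ) {σ : ℝ} (hσ : 1 / 2 ≤ σ) :
    finiteEulerProduct P σ ≤ exp (4 * ∑ p ∈ P with p.Prime, (p : ℝ) ^ (-σ)) := by
  rw [finiteEulerProduct, mul_sum, exp_sum]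
  refine prod_le_prod (fun p hp ↦ ?_) fun p hp ↦ ?_
  · exact inv_nonneg.mpr (sub_nonneg.mpr
      (prime_rpow_neg_lt_one (mem_filter.mp hp).2 (by linarith)).le)
  · exact inv_one_sub_le_exp (rpow_nonneg p.cast_nonneg _)
      (prime_rpow_neg_le_three_quarters (mem_filter.mp hp).2 hσ)

lemma sum_primesLE_rpow_le {Y : ℕ} (hY : 2 ≤ Y) :
    ∑ p ∈ Y.primesLE, (p : ℝ) ^ (-(1 - (Real.log Y)⁻¹)) ≤
      exp 1 * (exp 1 * Real.log (1 + Real.log Y)) := by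
  refine le_trans ?_ (mul_le_mul_of_nonneg_left (sum_inv_primesLE_le hY) (exp_pos 1).le)
  rw [mul_sum]
  refine sum_le_sum fun p hp ↦ ?_
  have hp0 : (0 : ℝ) < p := mod_cast (Nat.prime_of_mem_primesLE hp).pos
  calc (p : ℝ) ^ (-(1 - (Real.log Y)⁻¹)) = (p : ℝ) ^ (Real.log Y)⁻¹ * (p : ℝ)⁻¹ := by
        rw [neg_sub, rpow_sub_one hp0.ne', div_eq_mul_inv]
    _ ≤ exp 1 * (p : ℝ)⁻¹ := by
        gcongr; exact rpow_inv_log_le_exp_one hY (Nat.le_of_mem_primesLE hp)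

lemma finiteEulerProduct_le {P : Finset ℕ} {Y q : ℕ} (hY : 8 ≤ Y) (hq : q.Prime)
    (hP : P ⊆ insert q Y.primesLE) :
    finiteEulerProduct P (1 - (Real.log Y)⁻¹) ≤ exp 3 * (1 + Real.log Y) ^ 30 := by
  set δ := (Real.log Y)⁻¹ with hδ
  have hlogY : 2 ≤ Real.log Y := by
    have h8 : Real.log 8 ≤ Real.log Y := log_le_log (by norm_num) (mod_cast hY)
    rw [show (8 : ℝ) = 2 ^ 3 by norm_num, log_pow] at h8
    push_cast at h8
    linarith [log_two_gt_d9]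
  have hσ : 1 / 2 ≤ 1 - δ := by
    have : δ ≤ 1 / 2 := by rw [hδ, inv_le_comm₀ (by linarith) (by norm_num)]; linarith
    linarith
  have hnonneg : ∀ p : ℕ, 0 ≤ (p : ℝ) ^ (-(1 - δ)) := fun p ↦ rpow_nonneg p.cast_nonneg _
  have hsum : ∑ p ∈ P with p.Prime, (p : ℝ) ^ (-(1 - δ)) ≤
      3 / 4 + exp 1 * (exp 1 * Real.log (1 + Real.log Y)) := calc
    _ ≤ ∑ p ∈ insert q Y.primesLE, (p : ℝ) ^ (-(1 - δ)) :=
        sum_le_sum_of_subset_of_nonneg ((filter_subset _ _).trans hP) fun p _ _ ↦ hnonneg p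
    _ ≤ (q : ℝ) ^ (-(1 - δ)) + ∑ p ∈ Y.primesLE, (p : ℝ) ^ (-(1 - δ)) := by
        by_cases hqY : q ∈ Y.primesLE
        · rw [insert_eq_of_mem hqY]
          exact le_add_of_nonneg_left (hnonneg q)
        · rw [sum_insert hqY]
    _ ≤ _ := add_le_add (prime_rpow_neg_le_three_quarters hq hσ)
        (sum_primesLE_rpow_le (by lia))
  refine (finiteEulerProduct_le_exp P hσ).trans ?_
  rw [← exp_log (show 0 < 1 + Real.log Y by linarith), ← exp_nat_mul, ← exp_add, exp_le_exp]
  have he : exp 1 * exp 1 ≤ 7.4 := by nlinarith [exp_one_lt_d9, exp_pos 1]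
  have hlog : 0 ≤ Real.log (1 + Real.log Y) := log_nonneg (by linarith)
  push_cast
  nlinarith

end SmoothNumbers

section CoprimeMoebius

lemma sum_Ioc_mul_div (f g : ArithmeticFunction ℝ) (N : ℕ) :
    ∑ n ∈ Ioc 0 N, (f * g) n / n = ∑ d ∈ Ioc 0 N, f d / d * ∑ e ∈ Ioc 0 (N / d), g e / e := by
  let divId : ArithmeticFunction ℝ → ArithmeticFunction ℝ := fun h ↦
    ⟨fun n ↦ h n / n, by simp only [CharP.cast_eq_zero, div_zero]⟩
  have hmul : divId (f * g) = divId f * divId g := by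
    ext n
    change (f * g) n / n = (divId f * divId g) n
    rw [mul_apply, mul_apply, sum_div]
    refine sum_congr rfl fun a ha ↦ ?_
    rw [← (Nat.mem_divisorsAntidiagonal.mp ha).1, Nat.cast_mul, ← div_mul_div_comm]
    rfl
  have hsum := sum_Ioc_mul_eq_sum_sum (divId f) (divId g) N
  rwa [← hmul] at hsum

/-- The indicator function of the positive integers all of whose prime factors lie in `T`. -/
noncomputable def factoredIndicator (T : Finset ℕ) : ArithmeticFunction ℝ :=
  ⟨fun n ↦ if n ∈ Nat.factoredNumbers T then 1 else 0, by simp [Nat.factoredNumbers]⟩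

/-- The Möbius function restricted to the integers with no prime factor in `T`. -/
noncomputable def coprimeMoebius (T : Finset ℕ) : ArithmeticFunction ℝ :=
  ⟨fun n ↦ if Disjoint n.primeFactors T then (moebius n : ℝ) else 0, by simp⟩

lemma factoredIndicator_apply (T : Finset ℕ) (n : ℕ) :
    factoredIndicator T n = if n ∈ Nat.factoredNumbers T then 1 else 0 := rfl

lemma coprimeMoebius_apply (T : Finset ℕ) (n : ℕ) :
    coprimeMoebius T n = if Disjoint n.primeFactors T then (moebius n : ℝ) else 0 := rfl

lemma isMultiplicative_factoredIndicator (T : Finset ℕ) :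
    (factoredIndicator T).IsMultiplicative := by
  refine IsMultiplicative.iff_ne_zero.mpr ⟨?_, fun {m n} hm hn hmn ↦ ?_⟩
  · rw [factoredIndicator_apply, if_pos ⟨one_ne_zero, by simp⟩]
  · simp only [factoredIndicator_apply, Nat.mem_factoredNumbers_iff_primeFactors_subset,
      hmn.primeFactors_mul, union_subset_iff, mul_ne_zero_iff, hm, hn, ne_eq, not_false_eq_true,
      true_and, ite_and, ite_mul, one_mul, zero_mul]

lemma isMultiplicative_coprimeMoebius (T : Finset ℕ) :
    (coprimeMoebius T).IsMultiplicative := by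
  refine IsMultiplicative.iff_ne_zero.mpr ⟨?_, fun {m n} _ _ hmn ↦ ?_⟩
  · simp [coprimeMoebius_apply]
  · simp only [coprimeMoebius_apply, hmn.primeFactors_mul, disjoint_union_left,
      isMultiplicative_moebius.map_mul_of_coprime hmn, Int.cast_mul, ite_zero_mul_ite_zero]

lemma coprimeMoebius_mul_zeta (T : Finset ℕ) :
    coprimeMoebius T * (zeta : ArithmeticFunction ℝ) = factoredIndicator T := by
  rw [((isMultiplicative_coprimeMoebius T).mul
    isMultiplicative_zeta.natCast).eq_iff_eq_on_prime_powers _ _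
    (isMultiplicative_factoredIndicator T)]
  intro p i hp
  rw [coe_mul_zeta_apply, Nat.sum_divisors_prime_pow hp]
  rcases i with _ | i
  · simp [coprimeMoebius_apply, factoredIndicator_apply, Nat.mem_factoredNumbers]
  have hsquareful : ∑ j ∈ range i, coprimeMoebius T (p ^ (j + 1 + 1)) = 0 :=
    sum_eq_zero fun j _ ↦ by
      rw [coprimeMoebius_apply, moebius_apply_prime_pow hp (by lia)]
      simp
  rw [sum_range_succ', sum_range_succ', hsquareful]
  by_cases h : p ∈ T <;> simp [h, hp.ne_zero, hp, moebius_apply_prime hp,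
    coprimeMoebius_apply, factoredIndicator_apply,
    Nat.mem_factoredNumbers_iff_primeFactors_subset,
    Nat.primeFactors_prime_pow (Nat.succ_ne_zero _) hp]

lemma factoredIndicator_mul_moebius (T : Finset ℕ) :
    factoredIndicator T * (moebius : ArithmeticFunction ℝ) = coprimeMoebius T := by
  rw [← coprimeMoebius_mul_zeta, mul_assoc, coe_zeta_mul_coe_moebius, mul_one]

lemma fract_div_natCast {X : ℝ} (hX : 0 ≤ X) (m : ℕ) :
    Int.fract (X / m) = X / m - (⌊X⌋₊ / m : ℕ) := by
  rw [Int.fract, ← Nat.floor_div_natCast, natCast_floor_eq_intCast_floor (by positivity)]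

/-- The sum of `μ(m) {X / m}` over the integers `m ≤ X` with no prime factor in `T`. -/
noncomputable def coprimeMoebiusFractSum (T : Finset ℕ) (X : ℝ) : ℝ :=
  ∑ m ∈ Ioc 0 ⌊X⌋₊, coprimeMoebius T m * Int.fract (X / m)

lemma coprimeMoebiusFractSum_eq (T : Finset ℕ) {X : ℝ} (hX : 0 ≤ X) :
    coprimeMoebiusFractSum T X =
      X * (∑ d ∈ Ioc 0 ⌊X⌋₊ with d ∈ Nat.factoredNumbers T, (d : ℝ)⁻¹ * moebiusRecipSum (X / d)) -
        #{d ∈ Ioc 0 ⌊X⌋₊ | d ∈ Nat.factoredNumbers T} := by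
  have hcard := sum_Ioc_mul_zeta_eq_sum (coprimeMoebius T) ⌊X⌋₊
  have hmean := sum_Ioc_mul_div (factoredIndicator T) moebius ⌊X⌋₊
  rw [coprimeMoebius_mul_zeta] at hcard
  rw [factoredIndicator_mul_moebius] at hmean
  have hrecip : ∑ d ∈ Ioc 0 ⌊X⌋₊ with d ∈ Nat.factoredNumbers T,
      (d : ℝ)⁻¹ * moebiusRecipSum (X / d) = ∑ m ∈ Ioc 0 ⌊X⌋₊, coprimeMoebius T m / m := by
    rw [hmean, sum_filter]
    refine sum_congr rfl fun d _ ↦ ?_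
    rw [moebiusRecipSum, Nat.floor_div_natCast, factoredIndicator_apply, ite_div, zero_div,
      one_div, ite_mul, zero_mul]
    rfl
  rw [hrecip, card_filter, Nat.cast_sum]
  simp only [Nat.cast_ite, Nat.cast_one, Nat.cast_zero, ← factoredIndicator_apply]
  rw [hcard, mul_sum, ← sum_sub_distrib, coprimeMoebiusFractSum]
  refine sum_congr rfl fun m _ ↦ ?_
  rw [fract_div_natCast hX]
  ring

lemma log_sqrt_le_log_div {X : ℝ} (hX : 0 < X) {d : ℝ} (hd : 0 < d) (hdX : d ≤ √X) :
    Real.log X / 2 ≤ Real.log (X / d) := by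
  rw [← log_sqrt hX.le]
  refine log_le_log (sqrt_pos.mpr hX) ?_
  rw [le_div_iff₀ hd]
  nlinarith [mul_self_sqrt hX.le, sqrt_nonneg X]

lemma sum_inv_mul_abs_moebiusRecipSum_le {D X : ℝ} (hD : 0 ≤ D)
    (hg : ∀ t : ℝ, 2 ≤ t → |moebiusRecipSum t| ≤ D / Real.log t ^ 2) (hX : 4 ≤ X) {S : Finset ℕ}
    (hS : S ⊆ Ioc 0 ⌊X⌋₊) (hSX : ∀ d ∈ S, (d : ℝ) ≤ √X) :
    ∑ d ∈ S, (d : ℝ)⁻¹ * |moebiusRecipSum (X / d)| ≤ 8 * D / Real.log X := by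
  have hX0 : 0 < X := by linarith
  have hlogX : 1 ≤ Real.log X := by
    rw [le_log_iff_exp_le hX0]
    linarith [exp_one_lt_d9]
  have hsqrt : 2 ≤ √X := le_sqrt_of_sq_le (by linarith)
  have hbound : ∀ d ∈ S, |moebiusRecipSum (X / d)| ≤ 4 * D / Real.log X ^ 2 := fun d hd ↦ by
    have hd0 : (0 : ℝ) < d := mod_cast (mem_Ioc.mp (hS hd)).1
    have hlog := log_sqrt_le_log_div hX0 hd0 (hSX d hd)
    have hXd : 2 ≤ X / d := by
      rw [le_div_iff₀ hd0]
      nlinarith [hSX d hd, mul_self_sqrt hX0.le]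
    calc |moebiusRecipSum (X / d)| ≤ D / Real.log (X / d) ^ 2 := hg _ hXd
      _ ≤ D / (Real.log X / 2) ^ 2 := by gcongr
      _ = 4 * D / Real.log X ^ 2 := by ring
  calc ∑ d ∈ S, (d : ℝ)⁻¹ * |moebiusRecipSum (X / d)|
      ≤ ∑ d ∈ S, (d : ℝ)⁻¹ * (4 * D / Real.log X ^ 2) := by gcongr with d hd; exact hbound d hd
    _ = (∑ d ∈ S, (d : ℝ)⁻¹) * (4 * D / Real.log X ^ 2) := by rw [sum_mul]
    _ ≤ (2 * Real.log X) * (4 * D / Real.log X ^ 2) := by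
        gcongr
        have hharmonic := sum_inv_Ioc_floor_le (show 1 ≤ X by linarith)
        have hsubset := sum_le_sum_of_subset_of_nonneg hS fun d _ _ ↦
          inv_nonneg.mpr (d.cast_nonneg (α := ℝ))
        linarith
    _ = 8 * D / Real.log X := by field_simp; ring

/-- Convolving with `ζ` turns the sum into an average of `∑ μ(n)/n` over `T`-factored `d`. That sum
is small for `d ≤ √X`, and there are few `d > √X` by Rankin's trick. -/
lemma exists_abs_coprimeMoebiusFractSum_le :
    ∃ D > 0, ∀ (T : Finset ℕ) (X δ : ℝ), 4 ≤ X → 0 ≤ δ → δ < 1 →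
      |coprimeMoebiusFractSum T X| ≤
        X * (D / Real.log X + 2 * ((√X) ^ (-δ) * finiteEulerProduct T (1 - δ))) := by
  obtain ⟨D, hD, hg⟩ := exists_abs_moebiusRecipSum_le 2
  refine ⟨8 * D, by positivity, fun T X δ hX hδ hδ1 ↦ ?_⟩
  have hX0 : 0 < X := by linarith
  have hsqrt : 1 ≤ √X := one_le_sqrt.mpr (by linarith)
  set F := {d ∈ Ioc 0 ⌊X⌋₊ | d ∈ Nat.factoredNumbers T} with hF
  set R := (√X) ^ (-δ) * finiteEulerProduct T (1 - δ)
  have hmem : ∀ d ∈ F, d ∈ Nat.factoredNumbers T := fun d hd ↦ (mem_filter.mp hd).2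
  have hsmall : ∑ d ∈ F with d ≤ ⌊√X⌋₊, (d : ℝ)⁻¹ * |moebiusRecipSum (X / d)| ≤
      8 * D / Real.log X :=
    sum_inv_mul_abs_moebiusRecipSum_le hD.le hg hX
      ((filter_subset _ _).trans (filter_subset _ _)) fun d hd ↦
        (Nat.le_floor_iff (sqrt_nonneg X)).mp (mem_filter.mp hd).2
  have hlarge : ∑ d ∈ F with ¬ d ≤ ⌊√X⌋₊, (d : ℝ)⁻¹ * |moebiusRecipSum (X / d)| ≤ R := calc
    _ ≤ ∑ d ∈ F with ¬ d ≤ ⌊√X⌋₊, (d : ℝ)⁻¹ := sum_le_sum fun d _ ↦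
        mul_le_of_le_one_right (by positivity) (abs_moebiusRecipSum_le_one _)
    _ ≤ R := sum_inv_le_rpow_mul_finiteEulerProduct hδ hδ1 (by positivity)
        (fun d hd ↦ hmem d (mem_filter.mp hd).1) fun d hd ↦
          (Nat.lt_of_floor_lt (not_le.mp (mem_filter.mp hd).2)).le
  have hcard : (#F : ℝ) ≤ X * R := calc
    (#F : ℝ) ≤ X ^ (1 - δ) * finiteEulerProduct T (1 - δ) :=
        card_le_rpow_mul_finiteEulerProduct (by linarith) hmem hX0.le fun d hd ↦
          (Nat.le_floor_iff hX0.le).mp (mem_Ioc.mp (mem_filter.mp hd).1).2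
    _ = X * (X ^ (-δ) * finiteEulerProduct T (1 - δ)) := by
        rw [sub_eq_add_neg, rpow_one_add' hX0.le (by linarith), mul_assoc]
    _ ≤ X * R := by
        have hnonneg := finiteEulerProduct_nonneg T (by linarith : 0 < 1 - δ)
        refine mul_le_mul_of_nonneg_left (mul_le_mul_of_nonneg_right ?_ hnonneg) hX0.le
        refine rpow_le_rpow_of_nonpos (by positivity) ?_ (by linarith)
        nlinarith [mul_self_sqrt hX0.le]
  rw [coprimeMoebiusFractSum_eq T hX0.le, ← hF]
  calc _ ≤ X * ∑ d ∈ F, (d : ℝ)⁻¹ * |moebiusRecipSum (X / d)| + #F := by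
        refine (abs_sub _ _).trans ?_
        rw [Nat.abs_cast, abs_mul, abs_of_pos hX0]
        gcongr
        refine (abs_sum_le_sum_abs _ _).trans_eq (sum_congr rfl fun d _ ↦ ?_)
        rw [abs_mul, abs_of_nonneg (by positivity)]
    _ ≤ X * (8 * D / Real.log X + R) + X * R := by
        rw [← sum_filter_add_sum_filter_not F (· ≤ ⌊√X⌋₊)]
        gcongr
    _ = _ := by ring

end CoprimeMoebius

section RoughNumbers

/-- The `y`-rough numbers up to `N`: the integers `1 ≤ m ≤ N` with no prime factor `p ≤ y`. -/
def roughUpTo (N y : ℕ) : Finset ℕ := {m ∈ Ioc 0 N | m.Coprime y.factorial}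

lemma mem_roughUpTo {N y m : ℕ} :
    m ∈ roughUpTo N y ↔ (0 < m ∧ m ≤ N) ∧ m.Coprime y.factorial := by
  rw [roughUpTo, mem_filter, mem_Ioc]

lemma psi_le_six_mul {x : ℝ} (hx : 0 ≤ x) : Chebyshev.psi x ≤ 6 * x := by
  refine (Chebyshev.psi_le_const_mul_self hx).trans ?_
  have hlog : Real.log 4 ≤ 2 := by
    rw [show (4 : ℝ) = 2 ^ 2 by norm_num, log_pow]
    push_cast
    linarith [log_two_lt_d9]
  gcongr
  linarith

lemma injOn_mul_roughUpTo (N y : ℕ) :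
    Set.InjOn (fun a : ℕ × ℕ ↦ a.1 * a.2) (roughUpTo N y ×ˢ Ioc 0 y : Finset (ℕ × ℕ)) := by
  rintro ⟨r, d⟩ h ⟨r', d'⟩ h' heq
  simp only [coe_product, Set.mem_prod, mem_coe, mem_roughUpTo, mem_Ioc] at h h' heq
  have hcop : r'.Coprime d := h'.1.2.coprime_dvd_right (Nat.dvd_factorial h.2.1 h.2.2)
  have hcop' : r.Coprime d' := h.1.2.coprime_dvd_right (Nat.dvd_factorial h'.2.1 h'.2.2)
  obtain rfl : d = d' := Nat.dvd_antisymm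
    (hcop.symm.dvd_of_dvd_mul_left (heq ▸ Dvd.intro_left r rfl))
    (hcop'.symm.dvd_of_dvd_mul_left (heq ▸ Dvd.intro_left r' rfl))
  rw [Nat.eq_of_mul_eq_mul_right h.2.1 heq]

lemma sum_inv_roughUpTo_mul_harmonic_le (N y : ℕ) :
    (∑ r ∈ roughUpTo N y, (r : ℝ)⁻¹) * ∑ d ∈ Ioc 0 y, (d : ℝ)⁻¹ ≤
      ∑ n ∈ Ioc 0 (N * y), (n : ℝ)⁻¹ := by
  rw [sum_mul_sum, ← sum_product']
  calc ∑ a ∈ roughUpTo N y ×ˢ Ioc 0 y, (a.1 : ℝ)⁻¹ * (a.2 : ℝ)⁻¹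
      = ∑ n ∈ (roughUpTo N y ×ˢ Ioc 0 y).image (fun a : ℕ × ℕ ↦ a.1 * a.2), (n : ℝ)⁻¹ := by
        rw [sum_image (injOn_mul_roughUpTo N y)]
        exact sum_congr rfl fun a _ ↦ by rw [Nat.cast_mul, mul_inv]
    _ ≤ _ := by
        refine sum_le_sum_of_subset_of_nonneg (image_subset_iff.mpr fun a ha ↦ ?_)
          fun n _ _ ↦ inv_nonneg.mpr n.cast_nonneg
        simp only [mem_product, mem_roughUpTo, mem_Ioc] at ha ⊢
        exact ⟨Nat.mul_pos ha.1.1.1 ha.2.1, Nat.mul_le_mul ha.1.1.2 ha.2.2⟩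

lemma log_eq_sum_roughUpTo {N y m : ℕ} (hm : m ∈ roughUpTo N y) :
    Real.log m = ∑ r ∈ roughUpTo N y with r ∣ m, vonMangoldt (m / r) := by
  obtain ⟨⟨hm0, hmN⟩, hcop⟩ := mem_roughUpTo.mp hm
  rw [← vonMangoldt_sum, ← Nat.sum_div_divisors]
  refine sum_congr (ext fun r ↦ ?_) fun _ _ ↦ rfl
  rw [mem_filter, mem_roughUpTo, Nat.mem_divisors]
  exact ⟨fun h ↦ ⟨⟨⟨Nat.pos_of_dvd_of_pos h.1 hm0, (Nat.le_of_dvd hm0 h.1).trans hmN⟩,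
    hcop.coprime_dvd_left h.1⟩, h.1⟩, fun h ↦ ⟨h.2, hm0.ne'⟩⟩

/-- Expand `log = Λ * 1` and note that both factors of a rough number are rough. -/
lemma sum_log_roughUpTo_le (N y : ℕ) :
    ∑ m ∈ roughUpTo N y, Real.log m ≤ 6 * N * ∑ r ∈ roughUpTo N y, (r : ℝ)⁻¹ := by
  rw [sum_congr rfl fun m hm ↦ log_eq_sum_roughUpTo hm]
  simp only [sum_filter]
  rw [sum_comm, mul_sum]
  refine sum_le_sum fun r hr ↦ ?_
  have hr0 : 0 < r := (mem_roughUpTo.mp hr).1.1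
  have hinj : Set.InjOn (· / r) ({m ∈ roughUpTo N y | r ∣ m} : Finset ℕ) := fun a ha b hb h ↦
    (Nat.div_left_inj (mem_filter.mp ha).2 (mem_filter.mp hb).2).mp h
  calc ∑ m ∈ roughUpTo N y, (if r ∣ m then vonMangoldt (m / r) else 0)
      = ∑ d ∈ image (· / r) {m ∈ roughUpTo N y | r ∣ m}, vonMangoldt d := by
        rw [sum_image hinj, sum_filter]
    _ ≤ ∑ d ∈ Ioc 0 (N / r), vonMangoldt d := by
        refine sum_le_sum_of_subset_of_nonneg (image_subset_iff.mpr fun m hm ↦ ?_)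
          fun _ _ _ ↦ vonMangoldt_nonneg
        obtain ⟨hm, hrm⟩ := mem_filter.mp hm
        obtain ⟨⟨hm0, hmN⟩, -⟩ := mem_roughUpTo.mp hm
        exact mem_Ioc.mpr
          ⟨Nat.div_pos (Nat.le_of_dvd hm0 hrm) hr0, Nat.div_le_div_right hmN⟩
    _ = Chebyshev.psi (N / r) := by rw [Chebyshev.psi, Nat.floor_div_eq_div]
    _ ≤ 6 * (N / r) := psi_le_six_mul (by positivity)
    _ = 6 * N * (r : ℝ)⁻¹ := by ring

lemma sum_log_div_le (N : ℕ) : ∑ m ∈ Ioc 0 N, Real.log (N / m) ≤ N := by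
  have hne : ∀ m ∈ Ioc 0 N, (N : ℝ) / m ≠ 0 := fun m hm ↦ by
    obtain ⟨hm0, hmN⟩ := mem_Ioc.mp hm
    exact div_ne_zero (by exact_mod_cast (hm0.trans_le hmN).ne') (by exact_mod_cast hm0.ne')
  have hfact : ∏ m ∈ Ioc 0 N, (m : ℝ) = N.factorial := by
    rw [← Nat.cast_prod, ← prod_Ico_id_eq_factorial]
    rfl
  rw [← log_prod hne, prod_div_distrib, prod_const, Nat.card_Ioc, Nat.sub_zero, hfact]
  rcases N.eq_zero_or_pos with rfl | hN
  · simp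
  · exact (log_le_iff_le_exp (by positivity)).mpr (pow_div_factorial_le_exp N N.cast_nonneg N)

lemma card_roughUpTo_le {N y : ℕ} (hy : 2 ≤ y) (hyN : y ≤ N) :
    (#(roughUpTo N y) : ℝ) ≤ 25 * N / Real.log y := by
  have hN0 : (0 : ℝ) < N := mod_cast (by lia : 0 < N)
  have hy0 : (0 : ℝ) < y := mod_cast (by lia : 0 < y)
  have hlogy : 0 < Real.log y := log_pos (mod_cast hy)
  have hyN' : Real.log y ≤ Real.log N :=
    log_le_log hy0 (mod_cast hyN)
  have hlogy2 : Real.log 2 ≤ Real.log y := log_le_log two_pos (mod_cast hy)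
  set A := ∑ r ∈ roughUpTo N y, (r : ℝ)⁻¹
  have hrecip : A * Real.log y ≤ 4 * Real.log N := calc
    A * Real.log y ≤ A * ∑ d ∈ Ioc 0 y, (d : ℝ)⁻¹ := by
        gcongr
        exact log_le_sum_inv_Ioc y
    _ ≤ 1 + Real.log (N * y : ℕ) :=
        (sum_inv_roughUpTo_mul_harmonic_le N y).trans (sum_inv_Ioc_le _)
    _ ≤ 4 * Real.log N := by
        rw [Nat.cast_mul, log_mul hN0.ne' hy0.ne']
        linarith [log_two_gt_d9]
  have hlog : #(roughUpTo N y) * Real.log N ≤ N + 6 * N * A := calc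
    #(roughUpTo N y) * Real.log N
      = ∑ m ∈ roughUpTo N y, Real.log (N / m) + ∑ m ∈ roughUpTo N y, Real.log m := by
        rw [← sum_add_distrib, ← nsmul_eq_mul, ← sum_const]
        refine sum_congr rfl fun m hm ↦ ?_
        rw [log_div hN0.ne' (by exact_mod_cast (mem_roughUpTo.mp hm).1.1.ne'),
          sub_add_cancel]
    _ ≤ N + 6 * N * A := by
        gcongr ?_ + ?_
        swap
        · exact sum_log_roughUpTo_le N y
        refine (sum_le_sum_of_subset_of_nonneg (filter_subset _ _) fun m hm _ ↦ ?_).trans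
          (sum_log_div_le N)
        obtain ⟨hm0, hmN⟩ := mem_Ioc.mp hm
        exact log_nonneg ((one_le_div (by positivity)).mpr (mod_cast hmN))
  rw [le_div_iff₀ hlogy]
  refine le_of_mul_le_mul_right ?_ (hlogy.trans_le hyN')
  calc #(roughUpTo N y) * Real.log y * Real.log N
      = #(roughUpTo N y) * Real.log N * Real.log y := by ring
    _ ≤ (N + 6 * N * A) * Real.log y := by gcongr
    _ = N * Real.log y + 6 * N * (A * Real.log y) := by ring
    _ ≤ N * Real.log N + 6 * N * (4 * Real.log N) := by gcongr
    _ = 25 * N * Real.log N := by ring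

end RoughNumbers

section MinFacSum

lemma sum_Ioc_filter_dvd {M : Type*} [AddCommMonoid M] {a : ℕ} (ha : 0 < a) (N : ℕ) (f : ℕ → M) :
    ∑ n ∈ Ioc 0 N with a ∣ n, f n = ∑ m ∈ Ioc 0 (N / a), f (a * m) := by
  have himage : {n ∈ Ioc 0 N | a ∣ n} = (Ioc 0 (N / a)).image (a * ·) := by
    ext n
    simp only [mem_filter, mem_image, mem_Ioc, Nat.le_div_iff_mul_le ha]
    constructor
    · rintro ⟨⟨hn0, hnN⟩, m, rfl⟩
      exact ⟨m, ⟨Nat.pos_of_mul_pos_left hn0, mul_comm a m ▸ hnN⟩, rfl⟩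
    · rintro ⟨m, ⟨hm0, hmN⟩, rfl⟩
      exact ⟨⟨Nat.mul_pos ha hm0, mul_comm a m ▸ hmN⟩, Dvd.intro m rfl⟩
  rw [himage, sum_image fun _ _ _ _ h ↦ Nat.eq_of_mul_eq_mul_left ha h]

lemma disjoint_primeFactors_insert_primesLE {p q m : ℕ} (hm : 0 < m) :
    Disjoint m.primeFactors (insert q p.primesLE) ↔ ∀ r, r.Prime → r ∣ m → r ≠ q ∧ p < r := by
  simp only [disjoint_left, Nat.mem_primeFactors, mem_insert, Nat.mem_primesLE, not_or, not_and]
  exact ⟨fun h r hr hrm ↦ ⟨(h ⟨hr, hrm, hm.ne'⟩).1,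
    not_le.mp fun hrp ↦ (h ⟨hr, hrm, hm.ne'⟩).2 hrp hr⟩,
    fun h r hr ↦ ⟨(h r hr.1 hr.2.1).1, fun hrp ↦ absurd (h r hr.1 hr.2.1).2 hrp.not_gt⟩⟩

lemma minFac_lcm_mul_eq_iff {p q m : ℕ} (hp : p.Prime) (hq : q.Prime) (hpq : p ≤ q) (hm : 0 < m)
    (hcop : (p.lcm q).Coprime m) :
    (p.lcm q * m).minFac = p ↔ Disjoint m.primeFactors (insert q p.primesLE) := by
  have hpdvd : p ∣ p.lcm q * m := (Nat.dvd_lcm_left p q).mul_right m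
  rw [disjoint_primeFactors_insert_primesLE hm]
  constructor
  · intro hmin r hr hrm
    have hne : ∀ s, s ∣ p.lcm q → r ≠ s := by
      rintro s hs rfl
      exact Nat.not_coprime_of_dvd_of_dvd hr.one_lt hs hrm hcop
    exact ⟨hne q (Nat.dvd_lcm_right p q), lt_of_le_of_ne
      (hmin ▸ Nat.minFac_le_of_dvd hr.two_le (hrm.mul_left _)) (hne p (Nat.dvd_lcm_left p q)).symm⟩
  · intro h
    refine le_antisymm (Nat.minFac_le_of_dvd hp.two_le hpdvd) ?_
    have hr := Nat.minFac_prime (ne_of_gt (hp.one_lt.trans_le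
      (Nat.le_of_dvd (Nat.mul_pos (Nat.lcm_pos hp.pos hq.pos) hm) hpdvd)))
    rcases hr.dvd_mul.mp (Nat.minFac_dvd (p.lcm q * m)) with hra | hrm
    · rcases hr.dvd_lcm.mp hra with hrp | hrq
      · exact ((Nat.prime_dvd_prime_iff_eq hr hp).mp hrp).ge
      · exact hpq.trans_eq ((Nat.prime_dvd_prime_iff_eq hr hq).mp hrq).symm
    · exact (h _ hr hrm).2.le

/-- For primes `p ≤ q`, the squarefree integers with least prime factor `p` that are divisible by
`q` are the products of `lcm(p, q)` with the squarefree integers coprime to `q` and to every prime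
up to `p`. -/
lemma ite_minFac_lcm_mul {p q m : ℕ} (hp : p.Prime) (hq : q.Prime) (hpq : p ≤ q) (hm : 0 < m) :
    (if (p.lcm q * m).minFac = p then (moebius (p.lcm q * m) : ℝ) else 0) =
      moebius (p.lcm q) * coprimeMoebius (insert q p.primesLE) m := by
  by_cases hcop : (p.lcm q).Coprime m
  · simp only [coprimeMoebius_apply, ← minFac_lcm_mul_eq_iff hp hq hpq hm hcop,
      isMultiplicative_moebius.map_mul_of_coprime hcop, Int.cast_mul, mul_ite, mul_zero]
  · have hsq : ¬ Squarefree (p.lcm q * m) := fun h ↦ hcop (Nat.squarefree_mul_iff.mp h).1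
    have hdisj : ¬ Disjoint m.primeFactors (insert q p.primesLE) := fun h ↦ by
      rw [disjoint_primeFactors_insert_primesLE hm] at h
      refine hcop (Nat.Coprime.coprime_dvd_left (Nat.lcm_dvd_mul p q) ?_)
      exact Nat.Coprime.mul_left (hp.coprime_iff_not_dvd.mpr fun hpm ↦ (h p hp hpm).2.false)
        (hq.coprime_iff_not_dvd.mpr fun hqm ↦ (h q hq hqm).1 rfl)
    rw [moebius_eq_zero_of_not_squarefree hsq, coprimeMoebius_apply, if_neg hdisj, Int.cast_zero,
      ite_self, mul_zero]

/-- The sum of `μ(n) {x / n}` over the integers `2 ≤ n ≤ x` with least prime factor `p` that are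
divisible by `q`. -/
noncomputable def minFacSum (x : ℝ) (p q : ℕ) : ℝ :=
  ∑ n ∈ Icc 2 ⌊x⌋₊ with n.minFac = p ∧ q ∣ n, (moebius n : ℝ) * Int.fract (x / n)

lemma minFacSum_eq_zero (x : ℝ) {p q : ℕ} (hq : q.Prime) (hqp : q < p) : minFacSum x p q = 0 := by
  rw [minFacSum, filter_false_of_mem fun n _ h ↦ ?_, sum_empty]
  exact (Nat.minFac_le_of_dvd hq.two_le h.2).not_gt (h.1 ▸ hqp)

lemma minFacSum_eq (x : ℝ) {p q : ℕ} (hp : p.Prime) (hq : q.Prime) (hpq : p ≤ q) :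
    minFacSum x p q =
      moebius (p.lcm q) * coprimeMoebiusFractSum (insert q p.primesLE) (x / (p.lcm q : ℕ)) := by
  have ha : 0 < p.lcm q := Nat.lcm_pos hp.pos hq.pos
  have hfilter : {n ∈ Icc 2 ⌊x⌋₊ | n.minFac = p ∧ q ∣ n} =
      {n ∈ {n ∈ Ioc 0 ⌊x⌋₊ | p.lcm q ∣ n} | n.minFac = p} := by
    ext n
    simp only [mem_filter, mem_Icc, mem_Ioc, Nat.lcm_dvd_iff]
    constructor
    · rintro ⟨⟨hn2, hnx⟩, hmin, hqn⟩
      exact ⟨⟨⟨by lia, hnx⟩, hmin ▸ n.minFac_dvd, hqn⟩, hmin⟩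
    · rintro ⟨⟨⟨hn0, hnx⟩, hpn, hqn⟩, hmin⟩
      exact ⟨⟨hp.two_le.trans (Nat.le_of_dvd hn0 hpn), hnx⟩, hmin, hqn⟩
  rw [minFacSum, hfilter, sum_filter, sum_Ioc_filter_dvd ha, coprimeMoebiusFractSum, mul_sum,
    Nat.floor_div_natCast]
  refine sum_congr rfl fun m hm ↦ ?_
  rw [← mul_assoc, ← ite_minFac_lcm_mul hp hq hpq (mem_Ioc.mp hm).1, ite_mul, zero_mul,
    Nat.cast_mul, div_div]

lemma inv_lcm_le {p q : ℕ} (hp : p.Prime) (hq : q.Prime) :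
    ((p.lcm q : ℕ) : ℝ)⁻¹ ≤ (p : ℝ)⁻¹ * (q : ℝ)⁻¹ + if q = p then (p : ℝ)⁻¹ else 0 := by
  split_ifs with h
  · rw [h, Nat.lcm_self]
    exact le_add_of_nonneg_left (by positivity)
  · rw [((Nat.coprime_primes hp hq).mpr (Ne.symm h)).lcm_eq_mul, Nat.cast_mul, mul_inv, add_zero]

lemma abs_minFacSum_le {x B : ℝ} (hB : 0 ≤ B) (hx : 0 ≤ x) {p q : ℕ} (hp : p.Prime) (hq : q.Prime)
    (hH : |coprimeMoebiusFractSum (insert q p.primesLE) (x / (p.lcm q : ℕ))| ≤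
      B * (x / (p.lcm q : ℕ))) :
    |minFacSum x p q| ≤ B * x * ((p : ℝ)⁻¹ * (q : ℝ)⁻¹ + if q = p then (p : ℝ)⁻¹ else 0) := by
  have hlcm := inv_lcm_le hp hq
  have hnonneg : (0 : ℝ) ≤ ((p.lcm q : ℕ) : ℝ)⁻¹ := by positivity
  rcases lt_or_ge q p with hqp | hpq
  · rw [minFacSum_eq_zero x hq hqp, abs_zero]
    exact mul_nonneg (mul_nonneg hB hx) (hnonneg.trans hlcm)
  · rw [minFacSum_eq x hp hq hpq, abs_mul]
    calc _ ≤ 1 * (B * (x / (p.lcm q : ℕ))) := by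
          gcongr
          exact abs_moebius_cast_le_one _
      _ = B * x * ((p.lcm q : ℕ) : ℝ)⁻¹ := by ring
      _ ≤ _ := by gcongr

end MinFacSum

section Assembly

lemma abs_moebius_mul_fract_le_one (x : ℝ) (n : ℕ) : |(moebius n : ℝ) * Int.fract (x / n)| ≤ 1 := by
  rw [abs_mul, abs_of_nonneg (Int.fract_nonneg (x / n))]
  exact mul_le_one₀ (abs_moebius_cast_le_one n) (Int.fract_nonneg _) (Int.fract_lt_one _).le

lemma abs_sum_moebius_mul_fract_le_card (x : ℝ) (s : Finset ℕ) :
    |∑ n ∈ s, (moebius n : ℝ) * Int.fract (x / n)| ≤ #s := by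
  refine (abs_sum_le_sum_abs _ _).trans ?_
  refine (sum_le_sum fun n _ ↦ abs_moebius_mul_fract_le_one x n).trans_eq ?_
  rw [sum_const, nsmul_eq_mul, mul_one]

lemma card_dvd_lt_minFac_le (N Y : ℕ) {q : ℕ} (hq : 0 < q) :
    #{n ∈ Icc 2 N | q ∣ n ∧ Y < n.minFac} ≤ #(roughUpTo (N / q) Y) := by
  refine card_le_card_of_injOn (· / q) (fun n hn ↦ ?_) fun a ha b hb h ↦ ?_
  · obtain ⟨hn, hqn, hY⟩ := mem_filter.mp (mem_coe.mp hn)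
    obtain ⟨hn2, hnN⟩ := mem_Icc.mp hn
    refine mem_coe.mpr (mem_roughUpTo.mpr ⟨⟨Nat.div_pos (Nat.le_of_dvd (by lia) hqn) hq,
      Nat.div_le_div_right hnN⟩, ?_⟩)
    exact ((Nat.coprime_factorial_iff (by lia)).mpr hY).coprime_dvd_left (Nat.div_dvd_of_dvd hqn)
  · exact (Nat.div_left_inj (mem_filter.mp (mem_coe.mp ha)).2.1
      (mem_filter.mp (mem_coe.mp hb)).2.1).mp h

lemma card_primes_gt_le {N V : ℕ} (hV : 2 ≤ V) :
    (#{q ∈ N.primesLE | V < q} : ℝ) ≤ 25 * N / Real.log V := by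
  rcases lt_or_ge N V with hNV | hVN
  · rw [filter_false_of_mem fun q hq ↦ not_lt.mpr ((Nat.le_of_mem_primesLE hq).trans hNV.le),
      card_empty, Nat.cast_zero]
    positivity
  · refine le_trans ?_ (card_roughUpTo_le hV hVN)
    refine mod_cast card_le_card fun q hq ↦ ?_
    obtain ⟨hqN, hVq⟩ := mem_filter.mp hq
    have hprime := Nat.prime_of_mem_primesLE hqN
    exact mem_roughUpTo.mpr ⟨⟨hprime.pos, Nat.le_of_mem_primesLE hqN⟩,
      (Nat.coprime_factorial_iff hprime.ne_one).mpr (hprime.minFac_eq.symm ▸ hVq)⟩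

/-- Write `N / q` as a count of cofactors `r ≤ N / V` and exchange the two sums. -/
lemma sum_div_primes_gt_le {N V : ℕ} (hV : 2 ≤ V) :
    ∑ q ∈ N.primesLE with V < q, ((N / q : ℕ) : ℝ) ≤
      25 * N / Real.log V * (1 + Real.log (N / V : ℕ)) := by
  have hcount : ∀ q ∈ {q ∈ N.primesLE | V < q},
      N / q ≤ ∑ r ∈ Ioc 0 (N / V), if q ≤ N / r then 1 else 0 := fun q hq ↦ by
    have hVq := (mem_filter.mp hq).2
    rw [← card_filter]
    calc N / q = #(Ioc 0 (N / q)) := (Nat.card_Ioc 0 _).symm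
      _ ≤ _ := card_le_card fun r hr ↦ by
        obtain ⟨hr0, hrN⟩ := mem_Ioc.mp hr
        have hrV : r ≤ N / V := hrN.trans (Nat.div_le_div_left hVq.le (by lia))
        refine mem_filter.mpr ⟨mem_Ioc.mpr ⟨hr0, hrV⟩, ?_⟩
        rw [Nat.le_div_iff_mul_le (by lia)] at hrN ⊢
        rwa [mul_comm]
  have hlogV : 0 < Real.log V := log_pos (mod_cast hV)
  calc ∑ q ∈ N.primesLE with V < q, ((N / q : ℕ) : ℝ)
      ≤ ∑ q ∈ N.primesLE with V < q, ∑ r ∈ Ioc 0 (N / V), if q ≤ N / r then (1 : ℝ) else 0 :=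
        sum_le_sum fun q hq ↦ by exact_mod_cast hcount q hq
    _ = ∑ r ∈ Ioc 0 (N / V), ∑ q ∈ N.primesLE with V < q, if q ≤ N / r then (1 : ℝ) else 0 :=
        sum_comm
    _ ≤ ∑ r ∈ Ioc 0 (N / V), (#{q ∈ (N / r).primesLE | V < q} : ℝ) := by
        refine sum_le_sum fun r _ ↦ ?_
        rw [sum_boole]
        refine mod_cast card_le_card fun q hq ↦ ?_
        simp only [mem_filter, Nat.mem_primesLE] at hq ⊢
        exact ⟨⟨hq.2, hq.1.1.2⟩, hq.1.2⟩
    _ ≤ ∑ r ∈ Ioc 0 (N / V), 25 * N / Real.log V * (r : ℝ)⁻¹ := by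
        refine sum_le_sum fun r _ ↦ (card_primes_gt_le hV).trans ?_
        calc 25 * ((N / r : ℕ) : ℝ) / Real.log V ≤ 25 * ((N : ℝ) / r) / Real.log V := by
              gcongr
              exact Nat.cast_div_le
          _ = _ := by ring
    _ ≤ _ := by
        rw [← mul_sum]
        gcongr
        exact sum_inv_Ioc_le _

variable (Q : ℕ → Prop) [DecidablePred Q]

lemma sum_moebius_mul_card_primeFactors (x : ℝ) :
    ∑ n ∈ Icc 2 ⌊x⌋₊ with Q n.minFac, (moebius n : ℝ) * #n.primeFactors * Int.fract (x / n) =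
      ∑ q ∈ ⌊x⌋₊.primesLE, ∑ n ∈ Icc 2 ⌊x⌋₊ with Q n.minFac ∧ q ∣ n,
        (moebius n : ℝ) * Int.fract (x / n) := by
  simp only [← filter_filter, sum_filter (_ ∣ ·)]
  rw [sum_comm]
  refine sum_congr rfl fun n hn ↦ ?_
  obtain ⟨hn2, hnx⟩ := mem_Icc.mp (mem_filter.mp hn).1
  have hfactors : {q ∈ ⌊x⌋₊.primesLE | q ∣ n} = n.primeFactors := by
    ext q
    simp only [mem_filter, Nat.mem_primesLE, Nat.mem_primeFactors]
    exact ⟨fun h ↦ ⟨h.1.2, h.2, by lia⟩,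
      fun h ↦ ⟨⟨(Nat.le_of_dvd (by lia) h.2.1).trans hnx, h.1⟩, h.2.1⟩⟩
  rw [← sum_filter, sum_const, nsmul_eq_mul, hfactors]
  ring

lemma abs_sum_moebius_mul_fract_dvd_le (x : ℝ) (Y : ℕ) {q : ℕ} (hq : 0 < q) :
    |∑ n ∈ Icc 2 ⌊x⌋₊ with Q n.minFac ∧ q ∣ n, (moebius n : ℝ) * Int.fract (x / n)| ≤
      ∑ p ∈ Y.primesLE, |minFacSum x p q| + #(roughUpTo (⌊x⌋₊ / q) Y) := by
  set F := {n ∈ Icc 2 ⌊x⌋₊ | Q n.minFac ∧ q ∣ n} with hF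
  have hmaps : ∀ n ∈ {n ∈ F | n.minFac ≤ Y}, n.minFac ∈ {p ∈ Y.primesLE | Q p} := fun n hn ↦ by
    simp only [hF, mem_filter, mem_Icc, Nat.mem_primesLE] at hn ⊢
    exact ⟨⟨hn.2, Nat.minFac_prime (by lia)⟩, hn.1.2.1⟩
  have hfiber : ∀ p ∈ {p ∈ Y.primesLE | Q p},
      {n ∈ {n ∈ F | n.minFac ≤ Y} | n.minFac = p} =
        {n ∈ Icc 2 ⌊x⌋₊ | n.minFac = p ∧ q ∣ n} := fun p hp ↦ by
    ext n
    simp only [hF, mem_filter, Nat.mem_primesLE] at hp ⊢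
    exact ⟨fun h ↦ ⟨h.1.1.1, h.2, h.1.1.2.2⟩, fun h ↦
      ⟨⟨⟨h.1, h.2.1 ▸ hp.2, h.2.2⟩, h.2.1 ▸ hp.1.1⟩, h.2.1⟩⟩
  rw [← sum_filter_add_sum_filter_not F (·.minFac ≤ Y)]
  refine (abs_add_le _ _).trans (add_le_add ?_ ?_)
  · rw [← sum_fiberwise_of_maps_to hmaps, sum_congr rfl fun p hp ↦ by rw [hfiber p hp]]
    exact (abs_sum_le_sum_abs _ _).trans
      (sum_le_sum_of_subset_of_nonneg (filter_subset _ _) fun _ _ _ ↦ abs_nonneg _)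
  · refine (abs_sum_moebius_mul_fract_le_card x _).trans (mod_cast le_trans (card_le_card ?_)
      (card_dvd_lt_minFac_le ⌊x⌋₊ Y hq))
    intro n hn
    simp only [hF, mem_filter, not_le] at hn ⊢
    exact ⟨hn.1.1, hn.1.2.2, hn.2⟩

lemma sum_large_primes_le (x : ℝ) {V : ℕ} (hV : 2 ≤ V) :
    ∑ q ∈ ⌊x⌋₊.primesLE with V < q,
        |∑ n ∈ Icc 2 ⌊x⌋₊ with Q n.minFac ∧ q ∣ n, (moebius n : ℝ) * Int.fract (x / n)| ≤
      25 * ⌊x⌋₊ / Real.log V * (1 + Real.log (⌊x⌋₊ / V : ℕ)) := by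
  refine (sum_le_sum fun q _ ↦ ?_).trans (sum_div_primes_gt_le hV)
  refine (abs_sum_moebius_mul_fract_le_card x _).trans ?_
  rw [← Nat.Ioc_filter_dvd_card_eq_div]
  refine mod_cast card_le_card fun n hn ↦ ?_
  simp only [mem_filter, mem_Icc, mem_Ioc] at hn ⊢
  exact ⟨⟨by lia, hn.1.2⟩, hn.2.2⟩

lemma sum_sum_inv_mul_inv_add_ite_le (Y V : ℕ) :
    ∑ q ∈ V.primesLE, ∑ p ∈ Y.primesLE,
        ((p : ℝ)⁻¹ * (q : ℝ)⁻¹ + if q = p then (p : ℝ)⁻¹ else 0) ≤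
      (∑ p ∈ Y.primesLE, (p : ℝ)⁻¹) * (1 + ∑ q ∈ V.primesLE, (q : ℝ)⁻¹) := by
  rw [sum_comm, sum_mul]
  refine sum_le_sum fun p _ ↦ ?_
  rw [sum_add_distrib, ← mul_sum, sum_ite_eq', mul_add, mul_one, add_comm]
  gcongr
  split_ifs
  exacts [le_rfl, by positivity]

lemma sum_small_primes_le {x B : ℝ} (hx : 0 ≤ x) (hB : 0 ≤ B) {Y V : ℕ} (hY : 2 ≤ Y)
    (hYV : Y * V ≤ ⌊x⌋₊)
    (hH : ∀ p ∈ Y.primesLE, ∀ q ∈ V.primesLE,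
      |coprimeMoebiusFractSum (insert q p.primesLE) (x / (p.lcm q : ℕ))| ≤
        B * (x / (p.lcm q : ℕ))) :
    ∑ q ∈ V.primesLE,
        |∑ n ∈ Icc 2 ⌊x⌋₊ with Q n.minFac ∧ q ∣ n, (moebius n : ℝ) * Int.fract (x / n)| ≤
      B * x * ((∑ p ∈ Y.primesLE, (p : ℝ)⁻¹) * (1 + ∑ q ∈ V.primesLE, (q : ℝ)⁻¹)) +
        25 * x / Real.log Y * ∑ q ∈ V.primesLE, (q : ℝ)⁻¹ := by
  have hlogY : 0 < Real.log Y := log_pos (mod_cast hY)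
  have hterm : ∀ q ∈ V.primesLE,
      |∑ n ∈ Icc 2 ⌊x⌋₊ with Q n.minFac ∧ q ∣ n, (moebius n : ℝ) * Int.fract (x / n)| ≤
        B * x * ∑ p ∈ Y.primesLE, ((p : ℝ)⁻¹ * (q : ℝ)⁻¹ + if q = p then (p : ℝ)⁻¹ else 0) +
          25 * x / Real.log Y * (q : ℝ)⁻¹ := fun q hq ↦ by
    have hprime := Nat.prime_of_mem_primesLE hq
    refine (abs_sum_moebius_mul_fract_dvd_le Q x Y hprime.pos).trans (add_le_add ?_ ?_)
    · rw [mul_sum]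
      exact sum_le_sum fun p hp ↦ abs_minFacSum_le hB hx (Nat.prime_of_mem_primesLE hp) hprime
        (hH p hp q hq)
    · have hYq : Y ≤ ⌊x⌋₊ / q := (Nat.le_div_iff_mul_le hprime.pos).mpr
        ((Nat.mul_le_mul_left Y (Nat.le_of_mem_primesLE hq)).trans hYV)
      calc (#(roughUpTo (⌊x⌋₊ / q) Y) : ℝ) ≤ 25 * (⌊x⌋₊ / q : ℕ) / Real.log Y :=
            card_roughUpTo_le hY hYq
        _ ≤ 25 * (x / q) / Real.log Y := by
            gcongr
            exact Nat.cast_div_le.trans (by gcongr; exact Nat.floor_le hx)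
        _ = 25 * x / Real.log Y * (q : ℝ)⁻¹ := by ring
  refine (sum_le_sum hterm).trans ?_
  rw [sum_add_distrib, ← mul_sum, ← mul_sum]
  gcongr
  exact sum_sum_inv_mul_inv_add_ite_le Y V

/-- Write `ω(n)` as a sum over the primes `q ∣ n` and group the terms by `p = minFac n`. The primes
`p > Y` and `q > V` contribute little by counting rough numbers. -/
lemma abs_sum_moebius_omega_fract_le {x B : ℝ} (hx : 0 ≤ x) (hB : 0 ≤ B) {Y V : ℕ} (hY : 2 ≤ Y)
    (hV : 2 ≤ V) (hYV : Y * V ≤ ⌊x⌋₊)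
    (hH : ∀ p ∈ Y.primesLE, ∀ q ∈ V.primesLE,
      |coprimeMoebiusFractSum (insert q p.primesLE) (x / (p.lcm q : ℕ))| ≤
        B * (x / (p.lcm q : ℕ))) :
    |∑ n ∈ Icc 2 ⌊x⌋₊ with Q n.minFac, (moebius n : ℝ) * #n.primeFactors * Int.fract (x / n)| ≤
      B * x * ((∑ p ∈ Y.primesLE, (p : ℝ)⁻¹) * (1 + ∑ q ∈ V.primesLE, (q : ℝ)⁻¹)) +
        25 * x / Real.log Y * (∑ q ∈ V.primesLE, (q : ℝ)⁻¹) +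
        25 * ⌊x⌋₊ / Real.log V * (1 + Real.log (⌊x⌋₊ / V : ℕ)) := by
  have hVx : V ≤ ⌊x⌋₊ := (Nat.le_mul_of_pos_left V (by lia)).trans hYV
  have hsmall : {q ∈ ⌊x⌋₊.primesLE | ¬ V < q} = V.primesLE := by
    ext q
    simp only [mem_filter, Nat.mem_primesLE, not_lt]
    exact ⟨fun h ↦ ⟨h.2, h.1.2⟩, fun h ↦ ⟨⟨h.1.trans hVx, h.2⟩, h.1⟩⟩
  rw [sum_moebius_mul_card_primeFactors]
  refine (abs_sum_le_sum_abs _ _).trans ?_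
  rw [← sum_filter_not_add_sum_filter _ (V < ·), hsmall]
  exact add_le_add (sum_small_primes_le Q hx hB hY hYV hH) (sum_large_primes_le Q x hV)

end Assembly

section Parameters

/-- The range `p ≤ exp (√(log x) / log log x)` of smallest prime factors treated individually, for
`l = log log x`. -/
noncomputable def minFacCutoff (l : ℝ) : ℕ := ⌊exp (exp (l / 2) / l)⌋₊

/-- The range of auxiliary primes `q ∣ n` treated individually, for `l = log log x`: after dividing
`x` by `p ≤ minFacCutoff l` and by `q`, at least `exp (√(log x) * log log x)` remains. -/
noncomputable def omegaPrimeCutoff (l : ℝ) : ℕ :=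
  ⌊exp (exp l - exp (l / 2) / l - exp (l / 2) * l)⌋₊

lemma exp_half_mul_self (l : ℝ) : exp (l / 2) * exp (l / 2) = exp l := by
  rw [← exp_add, add_halves]

lemma forty_mul_sq_le_exp_half {l : ℝ} (hl : 128 ≤ l) : 40 * l ^ 2 ≤ exp (l / 2) := by
  refine le_trans ?_ (pow_div_factorial_le_exp (l / 2) (by linarith) 4)
  have hsq : 128 ^ 2 ≤ l ^ 2 := by gcongr
  rw [show ((4 : ℕ).factorial : ℝ) = 24 by norm_num [Nat.factorial]]
  nlinarith

lemma half_exp_le_floor {u : ℝ} (hu : 0 ≤ u) : exp u / 2 ≤ ⌊exp u⌋₊ := by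
  have hone : (1 : ℝ) ≤ ⌊exp u⌋₊ :=
    mod_cast (Nat.le_floor (by exact_mod_cast one_le_exp hu) : 1 ≤ ⌊exp u⌋₊)
  linarith [Nat.lt_floor_add_one (exp u)]

lemma half_le_log_floor_exp {u : ℝ} (hu : 2 ≤ u) : u / 2 ≤ Real.log ⌊exp u⌋₊ := by
  have hlog := log_le_log (by positivity) (half_exp_le_floor (by linarith : 0 ≤ u))
  rw [log_div (exp_pos u).ne' two_ne_zero, log_exp] at hlog
  linarith [log_two_lt_d9]

lemma eight_le_minFacCutoff {l : ℝ} (hl : 128 ≤ l) : 8 ≤ minFacCutoff l := by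
  refine Nat.le_floor ?_
  have hratio : 7 ≤ exp (l / 2) / l := by
    rw [le_div_iff₀ (by linarith)]
    nlinarith [forty_mul_sq_le_exp_half hl]
  push_cast
  linarith [add_one_le_exp (exp (l / 2) / l)]

lemma one_lt_log_minFacCutoff {l : ℝ} (hl : 128 ≤ l) : 1 < Real.log (minFacCutoff l) := by
  have hY : (8 : ℝ) ≤ minFacCutoff l := mod_cast eight_le_minFacCutoff hl
  rw [lt_log_iff_exp_lt (by linarith)]
  linarith [exp_one_lt_d9]

lemma log_minFacCutoff_le {l : ℝ} (hl : 128 ≤ l) :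
    Real.log (minFacCutoff l) ≤ exp (l / 2) / l := by
  have hpos : (0 : ℝ) < minFacCutoff l :=
    mod_cast (eight_le_minFacCutoff hl).trans_lt' (by norm_num)
  rw [log_le_iff_le_exp hpos]
  exact Nat.floor_le (exp_pos _).le

lemma exp_half_div_le_log_minFacCutoff {l : ℝ} (hl : 128 ≤ l) :
    exp (l / 2) / l / 2 ≤ Real.log (minFacCutoff l) := by
  refine half_le_log_floor_exp ?_
  rw [le_div_iff₀ (by linarith)]
  nlinarith [forty_mul_sq_le_exp_half hl]

lemma exp_half_div_le_exp_half_mul {l : ℝ} (hl : 1 ≤ l) : exp (l / 2) / l ≤ exp (l / 2) * l :=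
  (div_le_self (exp_pos _).le hl).trans (le_mul_of_one_le_right (exp_pos _).le hl)

lemma half_exp_le_sub {l : ℝ} (hl : 128 ≤ l) :
    exp l / 2 ≤ exp l - exp (l / 2) / l - exp (l / 2) * l := by
  have hs := forty_mul_sq_le_exp_half hl
  have hdiv := exp_half_div_le_exp_half_mul (by linarith : 1 ≤ l)
  rw [← exp_half_mul_self]
  nlinarith

lemma log_omegaPrimeCutoff_ge {l : ℝ} (hl : 128 ≤ l) :
    exp l / 4 ≤ Real.log (omegaPrimeCutoff l) := by
  have hsub := half_exp_le_sub hl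
  have hlog := half_le_log_floor_exp (u := exp l - exp (l / 2) / l - exp (l / 2) * l)
    (by linarith [add_one_le_exp l])
  rw [omegaPrimeCutoff]
  linarith

lemma two_le_omegaPrimeCutoff {l : ℝ} (hl : 128 ≤ l) : 2 ≤ omegaPrimeCutoff l := by
  refine Nat.le_floor ?_
  have hsub := half_exp_le_sub hl
  push_cast
  linarith [add_one_le_exp l, add_one_le_exp (exp l - exp (l / 2) / l - exp (l / 2) * l)]

lemma minFacCutoff_mul_omegaPrimeCutoff_le (l : ℝ) :
    (minFacCutoff l : ℝ) * omegaPrimeCutoff l ≤ exp (exp l - exp (l / 2) * l) := calc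
  _ ≤ exp (exp (l / 2) / l) * exp (exp l - exp (l / 2) / l - exp (l / 2) * l) := by
    gcongr <;> exact Nat.floor_le (exp_pos _).le
  _ = _ := by
    rw [← exp_add]
    congr 1
    ring

lemma exp_le_exp_exp_div_lcm {l : ℝ} {p q : ℕ} (hp : p ∈ (minFacCutoff l).primesLE)
    (hq : q ∈ (omegaPrimeCutoff l).primesLE) :
    exp (exp (l / 2) * l) ≤ exp (exp l) / (p.lcm q : ℕ) := by
  have hpos : 0 < p.lcm q := Nat.lcm_pos (Nat.prime_of_mem_primesLE hp).pos
    (Nat.prime_of_mem_primesLE hq).pos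
  rw [le_div_iff₀ (mod_cast hpos)]
  calc exp (exp (l / 2) * l) * (p.lcm q : ℕ)
      ≤ exp (exp (l / 2) * l) * (minFacCutoff l * omegaPrimeCutoff l) := by
        gcongr
        exact_mod_cast (Nat.le_of_dvd (Nat.mul_pos (Nat.prime_of_mem_primesLE hp).pos
          (Nat.prime_of_mem_primesLE hq).pos) (Nat.lcm_dvd_mul p q)).trans
          (Nat.mul_le_mul (Nat.le_of_mem_primesLE hp) (Nat.le_of_mem_primesLE hq))
    _ ≤ exp (exp (l / 2) * l) * exp (exp l - exp (l / 2) * l) := by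
        gcongr
        exact minFacCutoff_mul_omegaPrimeCutoff_le l
    _ = exp (exp l) := by rw [← exp_add, add_sub_cancel]

lemma log_div_omegaPrimeCutoff_le {l : ℝ} (hl : 128 ≤ l) :
    1 + Real.log (⌊exp (exp l)⌋₊ / omegaPrimeCutoff l : ℕ) ≤ 4 * (exp (l / 2) * l) := by
  have hs := forty_mul_sq_le_exp_half hl
  have hsub := half_exp_le_sub hl
  have hV : exp (exp l - exp (l / 2) / l - exp (l / 2) * l) / 2 ≤ omegaPrimeCutoff l :=
    half_exp_le_floor ((by positivity : 0 ≤ exp l / 2).trans hsub)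
  have hratio : ((⌊exp (exp l)⌋₊ / omegaPrimeCutoff l : ℕ) : ℝ) ≤
      2 * exp (exp (l / 2) / l + exp (l / 2) * l) := calc
    _ ≤ (⌊exp (exp l)⌋₊ : ℝ) / omegaPrimeCutoff l := Nat.cast_div_le
    _ ≤ exp (exp l) / (exp (exp l - exp (l / 2) / l - exp (l / 2) * l) / 2) := by
        gcongr
        exact Nat.floor_le (exp_pos _).le
    _ = 2 * exp (exp l - (exp l - exp (l / 2) / l - exp (l / 2) * l)) := by
        rw [exp_sub (exp l) (_ - _)]
        ring
    _ = _ := by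
        congr 2
        ring
  have hdiv := exp_half_div_le_exp_half_mul (by linarith : 1 ≤ l)
  rcases Nat.eq_zero_or_pos (⌊exp (exp l)⌋₊ / omegaPrimeCutoff l) with hzero | hpos
  · rw [hzero, Nat.cast_zero, log_zero]
    nlinarith
  · have hlog := log_le_log (mod_cast hpos) hratio
    rw [log_mul two_ne_zero (exp_pos _).ne', log_exp] at hlog
    nlinarith [log_two_lt_d9]

lemma sum_inv_primesLE_le_of_le_exp_exp {N : ℕ} (hN : 2 ≤ N) {l : ℝ} (hl : 1 ≤ l)
    (hNl : (N : ℝ) ≤ exp (exp l)) : ∑ p ∈ N.primesLE, (p : ℝ)⁻¹ ≤ 6 * l := by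
  have hlogN : Real.log N ≤ exp l := (log_le_iff_le_exp (by positivity)).mpr hNl
  have hlogN0 : 0 ≤ Real.log N := log_natCast_nonneg N
  have hloglog : Real.log (1 + Real.log N) ≤ 2 * l := by
    rw [log_le_iff_le_exp (by positivity), two_mul, exp_add]
    nlinarith [add_one_le_exp l]
  calc ∑ p ∈ N.primesLE, (p : ℝ)⁻¹ ≤ exp 1 * Real.log (1 + Real.log N) := sum_inv_primesLE_le hN
    _ ≤ 3 * (2 * l) := by
        gcongr
        · exact log_nonneg (by linarith)
        · linarith [exp_one_lt_d9]
    _ = 6 * l := by ring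

lemma rankin_term_le {l X : ℝ} (hl : 128 ≤ l) (hX : exp (exp (l / 2) * l) ≤ X) {q : ℕ}
    (hq : q.Prime) {T : Finset ℕ} (hT : T ⊆ insert q (minFacCutoff l).primesLE) :
    (√X) ^ (-(Real.log (minFacCutoff l))⁻¹) *
      finiteEulerProduct T (1 - (Real.log (minFacCutoff l))⁻¹) ≤ exp (-(l / 2)) := by
  have hX0 : 0 < X := (exp_pos _).trans_le hX
  have hs := forty_mul_sq_le_exp_half hl
  have hlogY := log_minFacCutoff_le hl
  have hlogY0 : 0 < Real.log (minFacCutoff l) := one_pos.trans (one_lt_log_minFacCutoff hl)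
  have hδ : (Real.log (minFacCutoff l))⁻¹ < 1 :=
    inv_lt_one_of_one_lt₀ (one_lt_log_minFacCutoff hl)
  have hpow : (√X) ^ (-(Real.log (minFacCutoff l))⁻¹) ≤ exp (-(l ^ 2 / 2)) := by
    rw [rpow_def_of_pos (sqrt_pos.mpr hX0), log_sqrt hX0.le, exp_le_exp, mul_neg, neg_le_neg_iff,
      ← div_eq_mul_inv, le_div_iff₀ hlogY0]
    calc l ^ 2 / 2 * Real.log (minFacCutoff l) ≤ l ^ 2 / 2 * (exp (l / 2) / l) := by gcongr
      _ = exp (l / 2) * l / 2 := by field_simp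
      _ ≤ Real.log X / 2 := by
          gcongr
          exact (le_log_iff_exp_le hX0).mpr hX
  have hprod : finiteEulerProduct T (1 - (Real.log (minFacCutoff l))⁻¹) ≤ exp (3 + 15 * l) := calc
    _ ≤ exp 3 * (1 + Real.log (minFacCutoff l)) ^ 30 :=
        finiteEulerProduct_le (eight_le_minFacCutoff hl) hq hT
    _ ≤ exp 3 * exp (l / 2) ^ 30 := by
        gcongr
        have hdiv : exp (l / 2) / l ≤ exp (l / 2) / 128 := by gcongr
        nlinarith
    _ = exp (3 + 15 * l) := by
        rw [← exp_nat_mul, ← exp_add]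
        congr 1
        push_cast
        ring
  calc _ ≤ exp (-(l ^ 2 / 2)) * exp (3 + 15 * l) :=
        mul_le_mul hpow hprod (finiteEulerProduct_nonneg T (by linarith)) (exp_pos _).le
    _ ≤ exp (-(l / 2)) := by
        rw [← exp_add, exp_le_exp]
        nlinarith

lemma exists_abs_coprimeMoebiusFractSum_le_div_exp_half :
    ∃ C > 0, ∀ (l X : ℝ) (q : ℕ) (T : Finset ℕ), 128 ≤ l → q.Prime →
      T ⊆ insert q (minFacCutoff l).primesLE → exp (exp (l / 2) * l) ≤ X →
      |coprimeMoebiusFractSum T X| ≤ C / exp (l / 2) * X := by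
  obtain ⟨D, hD, hbound⟩ := exists_abs_coprimeMoebiusFractSum_le
  refine ⟨D + 2, by positivity, fun l X q T hl hq hT hX ↦ ?_⟩
  have hX0 : 0 < X := (exp_pos _).trans_le hX
  have hs := forty_mul_sq_le_exp_half hl
  have hX4 : 4 ≤ X := by nlinarith [add_one_le_exp (exp (l / 2) * l)]
  have hlogX : exp (l / 2) ≤ Real.log X :=
    (le_mul_of_one_le_right (exp_pos _).le (by linarith)).trans ((le_log_iff_exp_le hX0).mpr hX)
  have hlogY := one_lt_log_minFacCutoff hl
  calc _ ≤ X * (D / Real.log X + 2 * _) :=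
        hbound T X _ hX4 (inv_nonneg.mpr (by linarith)) (inv_lt_one_of_one_lt₀ hlogY)
    _ ≤ X * (D / exp (l / 2) + 2 * exp (-(l / 2))) := by
        gcongr
        exact rankin_term_le hl hX hq hT
    _ = (D + 2) / exp (l / 2) * X := by
        rw [exp_neg]
        ring

lemma exists_abs_sum_moebius_omega_fract_le_of_large :
    ∃ C > 0, ∀ (Q : ℕ → Prop) [DecidablePred Q] (l : ℝ), 128 ≤ l →
      |∑ n ∈ Icc 2 ⌊exp (exp l)⌋₊ with Q n.minFac,
          (moebius n : ℝ) * #n.primeFactors * Int.fract (exp (exp l) / n)| ≤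
        C * exp (exp l) * l ^ 2 / exp (l / 2) := by
  obtain ⟨C, hC, hH⟩ := exists_abs_coprimeMoebiusFractSum_le_div_exp_half
  refine ⟨42 * C + 700, by positivity, fun Q _ l hl ↦ ?_⟩
  set x := exp (exp l)
  set s := exp (l / 2)
  have hs0 : 0 < s := exp_pos _
  set Y := minFacCutoff l
  set V := omegaPrimeCutoff l
  have hx0 : 0 < x := exp_pos _
  have hlogV : exp l / 4 ≤ Real.log V := log_omegaPrimeCutoff_ge hl
  have hlogY : s / l / 2 ≤ Real.log Y := exp_half_div_le_log_minFacCutoff hl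
  have hY2 : 2 ≤ Y := (eight_le_minFacCutoff hl).trans' (by norm_num)
  have hV2 : 2 ≤ V := two_le_omegaPrimeCutoff hl
  have hYV : (Y : ℝ) * V ≤ exp (exp l - s * l) := minFacCutoff_mul_omegaPrimeCutoff_le l
  have hYVx : Y * V ≤ ⌊x⌋₊ := Nat.le_floor <| by
    push_cast
    exact hYV.trans (exp_le_exp.mpr (sub_le_self _ (by positivity)))
  have hprimes : ∀ N, 2 ≤ N → N ≤ ⌊x⌋₊ → ∑ p ∈ N.primesLE, (p : ℝ)⁻¹ ≤ 6 * l := fun N hN hNx ↦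
    sum_inv_primesLE_le_of_le_exp_exp hN (by linarith) ((Nat.le_floor_iff hx0.le).mp hNx)
  have hPY := hprimes Y hY2 ((Nat.le_mul_of_pos_right Y (by lia)).trans hYVx)
  have hPV := hprimes V hV2 ((Nat.le_mul_of_pos_left V (by lia)).trans hYVx)
  refine (abs_sum_moebius_omega_fract_le Q hx0.le (B := C / s) (by positivity) hY2 hV2 hYVx
    fun p hp q hq ↦ hH l _ q _ hl (Nat.prime_of_mem_primesLE hq) (insert_subset_insert _
      (Nat.primesLE_mono (Nat.le_of_mem_primesLE hp))) (exp_le_exp_exp_div_lcm hp hq)).trans ?_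
  have hl2 : 6 * l * (1 + 6 * l) ≤ 42 * l ^ 2 := by nlinarith
  calc _ ≤ C / s * x * (6 * l * (1 + 6 * l)) + 25 * x / (s / l / 2) * (6 * l) +
        25 * x / (exp l / 4) * (4 * (s * l)) := by
        gcongr
        · exact Nat.floor_le hx0.le
        · exact log_div_omegaPrimeCutoff_le hl
    _ = C / s * x * (6 * l * (1 + 6 * l)) + 300 * x * l ^ 2 / s + 400 * x * l / s := by
        rw [← exp_half_mul_self l]
        field_simp
        ring
    _ ≤ C / s * x * (42 * l ^ 2) + 300 * x * l ^ 2 / s + 400 * x * l ^ 2 / s := by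
        gcongr
        nlinarith
    _ = _ := by ring

end Parameters

section SmallRange

lemma card_primeFactors_le_self (n : ℕ) : #n.primeFactors ≤ n :=
  (card_le_card fun _ hp ↦ mem_Ioc.mpr ⟨(Nat.prime_of_mem_primeFactors hp).pos,
    Nat.le_of_mem_primeFactors hp⟩).trans_eq (Nat.card_Ioc 0 n)

lemma abs_sum_moebius_omega_fract_le_sq {x : ℝ} (hx : 0 ≤ x) {s : Finset ℕ}
    (hs : s ⊆ Icc 2 ⌊x⌋₊) :
    |∑ n ∈ s, (moebius n : ℝ) * #n.primeFactors * Int.fract (x / n)| ≤ x * x := by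
  have hterm : ∀ n ∈ s, |(moebius n : ℝ) * #n.primeFactors * Int.fract (x / n)| ≤ x := fun n hn ↦ by
    have hnx : (n : ℝ) ≤ x := (Nat.le_floor_iff hx).mp (mem_Icc.mp (hs hn)).2
    rw [mul_right_comm, abs_mul, Nat.abs_cast]
    calc _ ≤ 1 * x := by
          gcongr
          · exact abs_moebius_mul_fract_le_one x n
          · exact (Nat.cast_le.mpr (card_primeFactors_le_self n)).trans hnx
      _ = x := one_mul x
  refine (abs_sum_le_sum_abs _ _).trans ((sum_le_card_nsmul _ _ x hterm).trans ?_)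
  rw [nsmul_eq_mul]
  gcongr
  refine le_trans (mod_cast (card_le_card hs).trans ?_) (Nat.floor_le hx)
  rw [Nat.card_Icc]
  lia

lemma one_le_log_log {x : ℝ} (hx : 16 ≤ x) : 1 ≤ Real.log (Real.log x) := by
  have hlog16 : Real.log 16 ≤ Real.log x := log_le_log (by norm_num) hx
  rw [show (16 : ℝ) = 2 ^ 4 by norm_num, log_pow] at hlog16
  push_cast at hlog16
  rw [le_log_iff_exp_le (by linarith [log_two_gt_d9])]
  linarith [log_two_gt_d9, exp_one_lt_d9]

end SmallRange

theorem moebius_omega_fract_smallest_factor_progression_bound_general :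
    ∃ C > 0, ∀ (Q : ℕ → Prop) [DecidablePred Q] (x : ℝ), 16 ≤ x →
      |∑ n ∈ Icc 2 ⌊x⌋₊ with Q n.minFac, (moebius n : ℝ) * #n.primeFactors * Int.fract (x / n)| ≤
        C * x * Real.log (Real.log x) ^ 2 / √(Real.log x) := by
  obtain ⟨C, hC, hlarge⟩ := exists_abs_sum_moebius_omega_fract_le_of_large
  refine ⟨C + exp (exp 128) * exp (128 / 2), by positivity, fun Q _ x hx ↦ ?_⟩
  have hlog : 0 < Real.log x := log_pos (by linarith)
  have hl := one_le_log_log hx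
  obtain ⟨l, rfl⟩ : ∃ l, x = exp (exp l) :=
    ⟨Real.log (Real.log x), by rw [exp_log hlog, exp_log (by linarith)]⟩
  rw [log_exp, log_exp] at hl
  rw [log_exp, log_exp, ← exp_half]
  rcases le_total 128 l with hl128 | hl128
  · refine (hlarge Q l hl128).trans ?_
    gcongr
    exact le_add_of_nonneg_right (by positivity)
  · refine (abs_sum_moebius_omega_fract_le_sq (exp_pos _).le (filter_subset _ _)).trans ?_
    rw [le_div_iff₀ (exp_pos _)]
    calc exp (exp l) * exp (exp l) * exp (l / 2)
        ≤ exp (exp l) * exp (exp 128) * exp (128 / 2) := by gcongr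
      _ = (0 + exp (exp 128) * exp (128 / 2)) * exp (exp l) * 1 ^ 2 := by ring
      _ ≤ _ := by gcongr

/-- For fixed `1 ≤ ℓ ≤ k` with `gcd(ℓ,k) = 1`, there is `C > 0` with
`|Σ_{2 ≤ n ≤ x, p(n) ≡ ℓ (mod k)} μ(n) ω(n) {x/n}| ≤ C x (log log x)^{5/2} / √(log x)`
for all `x ≥ 16`, where `{y}` is the fractional part and `p(n)` the smallest prime
factor of `n`. -/
theorem moebius_omega_fract_smallest_factor_progression_bound
    (k ℓ : ℕ) (hl : 1 ≤ ℓ) (hlk : ℓ ≤ k) (hgcd : Nat.gcd ℓ k = 1) :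
    ∃ C > (0 : ℝ), ∀ x : ℝ, 16 ≤ x →
      |∑ n ∈ (Finset.Icc 2 ⌊x⌋₊).filter (fun n => n.minFac ≡ ℓ [MOD k]),
          (moebius n : ℝ) * (n.primeFactors.card : ℝ) * Int.fract (x / n)|
        ≤ C * x * (Real.log (Real.log x)) ^ ((5 : ℝ) / 2) / Real.sqrt (Real.log x) := by
  obtain ⟨C, hC, hbound⟩ := moebius_omega_fract_smallest_factor_progression_bound_general
  refine ⟨C, hC, fun x hx ↦ (hbound (· ≡ ℓ [MOD k]) x hx).trans ?_⟩
  rw [← rpow_two]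
  gcongr
  exacts [one_le_log_log hx, by norm_num]
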